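/- arXiv:1707.09550 — 2 statements merged into one kernel-verified Lean document; each statement's English description precedes it below -/
import Mathlib

section
/- Let s ∈ ℕ∪{0}, let j be an index with data (λ_j, a_j, b_j, c_j, d_j) and p_j := a_j+b_j+c_j+d_j ≥ 2, and assume a_j ≥ 1. Set M_{1,*} := −(1/2) λ_j a_j (ik_{(1,p_j−1)}) (ik_{p_j})^{s+1} (ik_{p_j+1})^{s+1} D_{a_j−1,b_j,c_j} M_H^{(p_j)} M_NZ^{(p_j)}. Then there exists C > 0 (depending on s, p_j, λ_j and the constant C₀ in M_H) such that for all real-valued f, g ∈ C^∞(𝕋): |Γ^{(p_j)}(λ_j a_j (ik_{p_j})^{s+2}(ik_{p_j+1})^{s+1} D_{a_j−1,b_j,c_j}; f,…,f,g,g) − Γ^{(p_j)}(M_{1,*}; f,…,f,g,g)| ≤ C ‖f‖_{H⁴}^{p_j−2} ‖f‖_{H⁸} ‖g‖_{H^s}², where the first p_j−1 arguments are f and the last two are g. -/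
/- Lemma lem_ga1: normal form reduction for the D_{a-1,b,c} part of the energy estimate. -/

namespace FifthOrderStmt16

open scoped NNReal Classical

/-- Maximum of a nonnegative real-valued family over a finset (`0` if the finset is empty). -/
noncomputable def fmax {α : Type*} (s : Finset α) (f : α → ℝ) : ℝ :=
  ((s.sup fun i => Real.toNNReal (f i) : ℝ≥0) : ℝ)

/-- Fourier coefficient of a `2π`-periodic function `f : ℝ → ℂ`:
`f̂(k) = (1/2π) ∫_0^{2π} f(x) e^{-ikx} dx`. -/
noncomputable def fhat (f : ℝ → ℂ) (k : ℤ) : ℂ :=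
  (Complex.ofReal (2 * Real.pi))⁻¹ *
    ∫ x in (0:ℝ)..(2 * Real.pi), f x * Complex.exp (-Complex.I * (k : ℂ) * (x : ℂ))

/-- The multilinear form
`Γ^(p)(M; f₁,…,f_{p+1}) = Σ_{k ∈ Z₀^(p)} M(k) ∏_{l=1}^{p+1} f̂_l(k_l)`,
where `Z₀^(p) = {k ∈ ℤ^{p+1} : k₁ + ⋯ + k_{p+1} = 0}` (indices shifted to start at `0`). -/
noncomputable def Gam (p : ℕ) (M : (Fin (p + 1) → ℤ) → ℂ) (F : Fin (p + 1) → ℝ → ℂ) : ℂ :=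
  ∑' k : {k : Fin (p + 1) → ℤ // (∑ i, k i) = 0}, M k.1 * ∏ i, fhat (F i) (k.1 i)

/-- The argument tuple `(f, …, f, g, g)`: `p − 1` copies of `f` followed by two copies of `g`. -/
def tup (p : ℕ) (f g : ℝ → ℂ) : Fin (p + 1) → ℝ → ℂ :=
  fun i => if (i : ℕ) < p - 1 then f else g

/-- Sobolev norm `‖f‖_{H^s} = (Σ_k (1+k²)^s |f̂(k)|²)^{1/2}`. -/
noncomputable def hsNormC (s : ℕ) (f : ℝ → ℂ) : ℝ :=
  Real.sqrt (∑' k : ℤ, (1 + (k : ℝ) ^ 2) ^ s * ‖fhat f k‖ ^ 2)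

/-- `‖∂_x^m f‖_{L²}² = Σ_k k^{2m} |f̂(k)|²`. -/
noncomputable def dxNormSq (m : ℕ) (f : ℝ → ℂ) : ℝ :=
  ∑' k : ℤ, (k : ℝ) ^ (2 * m) * ‖fhat f k‖ ^ 2

/-- Complexification of a real-valued function. -/
def cF (f : ℝ → ℝ) : ℝ → ℂ := fun x => (f x : ℂ)

/-- `k_{(1,p-1)} = k₁ + ⋯ + k_{p-1}` (with indices shifted to start at `0`). -/
def ksum1 (p : ℕ) (k : Fin (p + 1) → ℤ) : ℤ :=
  ∑ i ∈ Finset.univ.filter (fun i : Fin (p + 1) => (i : ℕ) < p - 1), k i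

/-- The high-frequency cut-off `M_H^(p)` with constant `C₀`:
`1` when `min{|k_p|^{4/5}, |k_{p+1}|^{4/5}} ≥ C₀ max{|k₁|,…,|k_{p-1}|}`, else `0`. -/
noncomputable def MH (C₀ : ℝ) (p : ℕ) (k : Fin (p + 1) → ℤ) : ℂ :=
  if C₀ * fmax (Finset.univ.filter (fun i : Fin (p + 1) => (i : ℕ) < p - 1))
        (fun i => |(k i : ℝ)|)
      ≤ min (|(k (⟨p - 1, by omega⟩ : Fin (p + 1)) : ℝ)| ^ ((4:ℝ)/5))
            (|(k (Fin.last p) : ℝ)| ^ ((4:ℝ)/5))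
  then 1 else 0

/-- The non-zero-sum cut-off `M_NZ^(p)`: `1` when `k_{(1,p-1)} ≠ 0`, else `0`. -/
def MNZ (p : ℕ) (k : Fin (p + 1) → ℤ) : ℂ :=
  if ksum1 p k ≠ 0 then 1 else 0

/-- `D_{a,b,c}(k) = ∏_{l=1}^{a}(ik_l)³ ∏_{l=a+1}^{a+b}(ik_l)² ∏_{l=a+b+1}^{a+b+c}(ik_l)`. -/
noncomputable def Dabc (p a b c : ℕ) (k : Fin (p + 1) → ℤ) : ℂ :=
  (∏ i ∈ Finset.univ.filter (fun i : Fin (p + 1) => (i : ℕ) < a),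
      (Complex.I * (k i : ℂ)) ^ 3)
    * (∏ i ∈ Finset.univ.filter (fun i : Fin (p + 1) => a ≤ (i : ℕ) ∧ (i : ℕ) < a + b),
        (Complex.I * (k i : ℂ)) ^ 2)
    * (∏ i ∈ Finset.univ.filter
          (fun i : Fin (p + 1) => a + b ≤ (i : ℕ) ∧ (i : ℕ) < a + b + c),
        (Complex.I * (k i : ℂ)))

/-- The multiplier
`M_{NR} = M_H M_NZ λ ((s−3/2) a (ik_{(1,p-1)}) D_{a-1,b,c} + b D_{a,b-1,c})`
(the conventions for `a = 0` resp. `b = 0` are automatic since the corresponding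
terms carry the factors `a` resp. `b`). -/
noncomputable def MNR (C₀ : ℝ) (s p : ℕ) (lam : ℝ) (a b c : ℕ)
    (k : Fin (p + 1) → ℤ) : ℂ :=
  MH C₀ p k * MNZ p k * (lam : ℂ) *
    (((s : ℂ) - 3/2) * (a : ℂ) * (Complex.I * (ksum1 p k : ℂ)) * Dabc p (a - 1) b c k
      + (b : ℂ) * Dabc p a (b - 1) c k)

/-- `P_{N_j}(f) = (λ_j b_j/2π) ∫_𝕋 (∂_x³f)^{a_j}(∂_x²f)^{b_j-1}(∂_xf)^{c_j}f^{d_j} dx`. -/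
noncomputable def PNj (lam : ℝ) (a b c d : ℕ) (f : ℝ → ℝ) : ℝ :=
  (lam * (b : ℝ) / (2 * Real.pi)) *
    ∫ x in (0:ℝ)..(2 * Real.pi),
      (iteratedDeriv 3 f x) ^ a * (iteratedDeriv 2 f x) ^ (b - 1) *
        (deriv f x) ^ c * (f x) ^ d

/-!
On the hyperplane `k₁ + ⋯ + k_{p+1} = 0`, exchanging the two arguments `g` symmetrizes
`(ik_p)^{s+2}(ik_{p+1})^{s+1}` into `½(ik_p + ik_{p+1})(ik_p)^{s+1}(ik_{p+1})^{s+1}`, that is, into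
`−½(ik_{(1,p-1)})(ik_p)^{s+1}(ik_{p+1})^{s+1}`. So only the part of the symmetrized multiplier
removed by `M_H M_NZ` remains. There either `k_{(1,p-1)} = 0`, and the multiplier vanishes, or one
of the high frequencies, and hence up to a constant the other one too, is at most `(C₀ v)^{5/4}`
with `v = max_{i<p} |k_i|`. Then `|k_{(1,p-1)} k_p k_{p+1}| ≲ v^{1 + 5/2} ≲ v⁴`, so that four more
derivatives fall on a single `f`.
A Young inequality, with `f` measured in weighted `ℓ¹` and `g` in weighted `ℓ²`, concludes.
-/

section Series

theorem summable_and_tsum_mul_le_sqrt_mul_sqrt {ι : Type*} {f g : ι → ℝ} (hf : ∀ i, 0 ≤ f i)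
    (hg : ∀ i, 0 ≤ g i) (hf2 : Summable fun i => f i ^ 2) (hg2 : Summable fun i => g i ^ 2) :
    (Summable fun i => f i * g i) ∧
      ∑' i, f i * g i ≤ √(∑' i, f i ^ 2) * √(∑' i, g i ^ 2) := by
  simp only [← Real.rpow_ofNat] at hf2 hg2
  simpa only [Real.rpow_ofNat, ← Real.sqrt_eq_rpow] using
    Real.summable_and_inner_le_Lp_mul_Lq_tsum_of_nonneg Real.HolderConjugate.two_two hf hg hf2 hg2

theorem hasSum_pi_prod {α : Type*} {q : ℕ} {w : Fin q → α → ℝ} (hw0 : ∀ i x, 0 ≤ w i x)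
    (hw : ∀ i, Summable (w i)) :
    HasSum (fun k : Fin q → α => ∏ i, w i (k i)) (∏ i, ∑' x, w i x) := by
  induction q with
  | zero => simp
  | succ q ih =>
    have htail : HasSum (fun k : Fin q → α => ∏ i, w i.succ (k i))
        (∏ i : Fin q, ∑' x, w i.succ x) := ih (fun i => hw0 i.succ) fun i => hw i.succ
    have htail0 : (0 : (Fin q → α) → ℝ) ≤ fun k => ∏ i, w i.succ (k i) :=
      fun k => Finset.prod_nonneg fun i _ => hw0 i.succ (k i)
    have hhead0 : (0 : α → ℝ) ≤ w 0 := hw0 0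
    have hsummable := (hw 0).mul_of_nonneg htail.summable hhead0 htail0
    rw [Fin.prod_univ_succ, ← (Fin.consEquiv fun _ => α).hasSum_iff]
    simpa [Function.comp_def, Fin.prod_univ_succ] using (hw 0).hasSum.mul htail hsummable

end Series

section ZeroSum

variable {A : Type*} [AddCommGroup A]

/-- Relabelling of the coordinates, `k ↦ k ∘ σ`, as a bijection of the zero-sum hyperplane. -/
def zeroSumPerm {ι : Type*} [Fintype ι] (σ : Equiv.Perm ι) :
    {k : ι → A // ∑ i, k i = 0} ≃ {k : ι → A // ∑ i, k i = 0} :=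
  (σ.symm.arrowCongr (Equiv.refl A)).subtypeEquiv fun k => by
    simp [Equiv.sum_comp σ k]

/-- The parametrization of the zero-sum hyperplane by all coordinates but the last one. -/
def zeroSumEquiv (q : ℕ) : {k : Fin (q + 2) → A // ∑ i, k i = 0} ≃ (Fin q → A) × A where
  toFun k := (fun i => k.1 i.castSucc.castSucc, k.1 (Fin.last q).castSucc)
  invFun x := ⟨Fin.snoc (Fin.snoc x.1 x.2 : Fin (q + 1) → A) (-(∑ i, x.1 i + x.2)), by
    simp [Fin.sum_univ_castSucc]⟩
  left_inv k := by
    have hlast : k.1 (Fin.last (q + 1))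
        = -(∑ i : Fin q, k.1 i.castSucc.castSucc + k.1 (Fin.last q).castSucc) := by
      have hk := k.2
      simp only [Fin.sum_univ_castSucc] at hk
      exact eq_neg_of_add_eq_zero_right hk
    refine Subtype.ext (funext fun i => ?_)
    refine Fin.lastCases ?_ (fun i => ?_) i
    · simp [hlast]
    · refine Fin.lastCases ?_ (fun i => ?_) i <;> simp
  right_inv x := by simp

/-- The exchange of the last two coordinates, which carry the high frequencies. -/
abbrev swapHigh (q : ℕ) : Equiv.Perm (Fin (q + 2)) :=
  Equiv.swap (Fin.last q).castSucc (Fin.last (q + 1))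

theorem swapHigh_apply_of_lt {q : ℕ} {i : Fin (q + 2)} (hi : (i : ℕ) < q) : swapHigh q i = i :=
  Equiv.swap_apply_of_ne_of_ne (fun h => by simp [h] at hi) (fun h => by simp [h] at hi)

theorem hasSum_zeroSum_mul_penultimate {q : ℕ} {w : Fin q → A → ℝ} {u : A → ℝ}
    (hw0 : ∀ i x, 0 ≤ w i x) (hw : ∀ i, Summable (w i)) (hu0 : ∀ x, 0 ≤ u x) (hu : Summable u) :
    HasSum (fun k : {k : Fin (q + 2) → A // ∑ i, k i = 0} =>
      (∏ i, w i (k.1 i.castSucc.castSucc)) * u (k.1 (Fin.last q).castSucc))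
      ((∏ i, ∑' x, w i x) * ∑' x, u x) := by
  have hw' := hasSum_pi_prod hw0 hw
  refine (zeroSumEquiv q).hasSum_iff.2 (hw'.mul hu.hasSum ?_)
  exact hw'.summable.mul_of_nonneg hu (fun k => Finset.prod_nonneg fun i _ => hw0 i (k i)) hu0

theorem hasSum_zeroSum_mul_last {q : ℕ} {w : Fin q → A → ℝ} {u : A → ℝ}
    (hw0 : ∀ i x, 0 ≤ w i x) (hw : ∀ i, Summable (w i)) (hu0 : ∀ x, 0 ≤ u x) (hu : Summable u) :
    HasSum (fun k : {k : Fin (q + 2) → A // ∑ i, k i = 0} =>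
      (∏ i, w i (k.1 i.castSucc.castSucc)) * u (k.1 (Fin.last (q + 1))))
      ((∏ i, ∑' x, w i x) * ∑' x, u x) := by
  convert (zeroSumPerm (swapHigh q)).hasSum_iff.2 (hasSum_zeroSum_mul_penultimate hw0 hw hu0 hu)
    using 2 with k
  simp [zeroSumPerm, swapHigh_apply_of_lt]

/-- Young's inequality `ℓ¹ * ⋯ * ℓ¹ * ℓ² * ℓ² → ℓ^∞`: Cauchy–Schwarz with the weight
`∏ᵢ wᵢ(kᵢ)`, in each factor of which one of the last two coordinates is eliminated. -/
theorem summable_and_tsum_zeroSum_prod_mul_le {q : ℕ} {w : Fin q → A → ℝ} {u v : A → ℝ}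
    (hw0 : ∀ i x, 0 ≤ w i x) (hw : ∀ i, Summable (w i)) (hu0 : ∀ x, 0 ≤ u x)
    (hu : Summable fun x => u x ^ 2) (hv0 : ∀ x, 0 ≤ v x) (hv : Summable fun x => v x ^ 2) :
    (Summable fun k : {k : Fin (q + 2) → A // ∑ i, k i = 0} =>
      (∏ i, w i (k.1 i.castSucc.castSucc))
        * (u (k.1 (Fin.last q).castSucc) * v (k.1 (Fin.last (q + 1))))) ∧
      ∑' k : {k : Fin (q + 2) → A // ∑ i, k i = 0}, (∏ i, w i (k.1 i.castSucc.castSucc))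
          * (u (k.1 (Fin.last q).castSucc) * v (k.1 (Fin.last (q + 1))))
        ≤ (∏ i, ∑' x, w i x) * (√(∑' x, u x ^ 2) * √(∑' x, v x ^ 2)) := by
  let P (k : {k : Fin (q + 2) → A // ∑ i, k i = 0}) : ℝ := ∏ i, w i (k.1 i.castSucc.castSucc)
  have hP (k) : 0 ≤ P k := Finset.prod_nonneg fun i _ => hw0 _ _
  have hW : 0 ≤ ∏ i, ∑' x, w i x := Finset.prod_nonneg fun i _ => tsum_nonneg (hw0 i)
  have hsumu := hasSum_zeroSum_mul_penultimate hw0 hw (fun _ => sq_nonneg _) hu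
  have hsumv := hasSum_zeroSum_mul_last hw0 hw (fun _ => sq_nonneg _) hv
  have hsq (k) (t : ℝ) : (√(P k) * t) ^ 2 = P k * t ^ 2 := by rw [mul_pow, Real.sq_sqrt (hP k)]
  have hmul (k) (t t' : ℝ) : √(P k) * t * (√(P k) * t') = P k * (t * t') := by
    rw [mul_mul_mul_comm, Real.mul_self_sqrt (hP k)]
  obtain ⟨hsummable, hle⟩ := summable_and_tsum_mul_le_sqrt_mul_sqrt
    (fun k => mul_nonneg (Real.sqrt_nonneg (P k)) (hu0 (k.1 (Fin.last q).castSucc)))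
    (fun k => mul_nonneg (Real.sqrt_nonneg (P k)) (hv0 (k.1 (Fin.last (q + 1)))))
    (by simpa only [hsq] using hsumu.summable) (by simpa only [hsq] using hsumv.summable)
  simp only [hmul] at hsummable hle
  refine ⟨hsummable, hle.trans_eq ?_⟩
  simp only [hsq, P]
  rw [hsumu.tsum_eq, hsumv.tsum_eq, Real.sqrt_mul hW, Real.sqrt_mul hW, mul_mul_mul_comm,
    Real.mul_self_sqrt hW]

end ZeroSum

section Bracket

/-- The Japanese bracket `⟨k⟩ = (1 + k²)^{1/2}`. -/
noncomputable def jap (k : ℤ) : ℝ := √(1 + (k : ℝ) ^ 2)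

theorem jap_sq (k : ℤ) : jap k ^ 2 = 1 + (k : ℝ) ^ 2 := Real.sq_sqrt (by positivity)

theorem one_le_jap (k : ℤ) : 1 ≤ jap k := Real.one_le_sqrt.2 (by nlinarith [sq_nonneg (k : ℝ)])

theorem jap_pos (k : ℤ) : 0 < jap k := one_pos.trans_le (one_le_jap k)

theorem jap_pow_nonneg (k : ℤ) (n : ℕ) : 0 ≤ jap k ^ n := pow_nonneg (jap_pos k).le n

theorem abs_le_jap (k : ℤ) : |(k : ℝ)| ≤ jap k := Real.abs_le_sqrt (by linarith)

theorem norm_I_mul_pow_le_jap_pow (k : ℤ) {m n : ℕ} (h : m ≤ n) :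
    ‖(Complex.I * (k : ℂ)) ^ m‖ ≤ jap k ^ n := by
  have hk : ‖Complex.I * (k : ℂ)‖ ≤ jap k := by simpa using abs_le_jap k
  rw [norm_pow]
  exact (pow_le_pow_left₀ (norm_nonneg _) hk m).trans (pow_le_pow_right₀ (one_le_jap k) h)

theorem summable_inv_jap_sq : Summable fun k : ℤ => (jap k)⁻¹ ^ 2 := by
  have hpow : Summable fun k : ℤ => 1 / (k : ℝ) ^ 2 := Real.summable_one_div_int_pow.2 one_lt_two
  refine hpow.of_norm_bounded_eventually ?_
  filter_upwards [(Set.finite_singleton (0 : ℤ)).compl_mem_cofinite] with k hk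
  have : (0 : ℝ) < (k : ℝ) ^ 2 := by have : k ≠ 0 := hk; positivity
  rw [inv_pow, jap_sq, norm_inv, Real.norm_of_nonneg (by positivity), ← one_div]
  exact one_div_le_one_div_of_le this (by linarith)

end Bracket

section Sobolev

/-- The weighted Fourier amplitude `⟨k⟩^s |F̂(k)|`, whose `ℓ²` norm is the `H^s` norm of `F`. -/
noncomputable def hsCoeff (s : ℕ) (F : ℝ → ℂ) (k : ℤ) : ℝ := jap k ^ s * ‖fhat F k‖

theorem hsCoeff_nonneg (s : ℕ) (F : ℝ → ℂ) (k : ℤ) : 0 ≤ hsCoeff s F k :=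
  mul_nonneg (jap_pow_nonneg k s) (norm_nonneg _)

theorem hsCoeff_sq (s : ℕ) (F : ℝ → ℂ) (k : ℤ) :
    hsCoeff s F k ^ 2 = (1 + (k : ℝ) ^ 2) ^ s * ‖fhat F k‖ ^ 2 := by
  rw [hsCoeff, mul_pow, pow_right_comm, jap_sq]

theorem hsCoeff_mono {r s : ℕ} (h : r ≤ s) (F : ℝ → ℂ) (k : ℤ) : hsCoeff r F k ≤ hsCoeff s F k :=
  mul_le_mul_of_nonneg_right (pow_le_pow_right₀ (one_le_jap k) h) (norm_nonneg _)

theorem hsNormC_eq (s : ℕ) (F : ℝ → ℂ) : hsNormC s F = √(∑' k, hsCoeff s F k ^ 2) := by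
  simp only [hsNormC, hsCoeff_sq]

theorem hsNormC_nonneg (s : ℕ) (F : ℝ → ℂ) : 0 ≤ hsNormC s F := Real.sqrt_nonneg _

/-- Membership in the Sobolev space `H^s(𝕋)`. Since `fhat` sees a function only through its values
on `[0, 2π]`, periodicity is not part of the notion; integrability is, because otherwise the
integrals defining `fhat` would be junk zeros. -/
structure MemHs (s : ℕ) (F : ℝ → ℂ) : Prop where
  intervalIntegrable : IntervalIntegrable F MeasureTheory.volume 0 (2 * Real.pi)
  summable : Summable fun k => hsCoeff s F k ^ 2

theorem MemHs.mono {r s : ℕ} {F : ℝ → ℂ} (h : r ≤ s) (hF : MemHs s F) : MemHs r F where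
  intervalIntegrable := hF.intervalIntegrable
  summable := hF.summable.of_nonneg_of_le (fun _ => sq_nonneg _) fun k =>
    pow_le_pow_left₀ (hsCoeff_nonneg r F k) (hsCoeff_mono h F k) 2

/-- The constant of the embedding of `H^{s+1}` into the functions with `⟨k⟩^s F̂(k)` in `ℓ¹`. -/
noncomputable def embeddingConst : ℝ := √(∑' k : ℤ, (jap k)⁻¹ ^ 2)

theorem embeddingConst_nonneg : 0 ≤ embeddingConst := Real.sqrt_nonneg _

theorem MemHs.summable_and_tsum_hsCoeff_le {s : ℕ} {F : ℝ → ℂ} (hF : MemHs (s + 1) F) :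
    Summable (hsCoeff s F) ∧ ∑' k, hsCoeff s F k ≤ embeddingConst * hsNormC (s + 1) F := by
  have hcancel (k : ℤ) : (jap k)⁻¹ * hsCoeff (s + 1) F k = hsCoeff s F k := by
    rw [hsCoeff, hsCoeff, pow_succ', mul_assoc, inv_mul_cancel_left₀ (jap_pos k).ne']
  have h := summable_and_tsum_mul_le_sqrt_mul_sqrt (fun k => (inv_pos.2 (jap_pos k)).le)
    (hsCoeff_nonneg (s + 1) F) summable_inv_jap_sq hF.summable
  simp only [hcancel, ← hsNormC_eq] at h
  exact h

theorem fhat_eq_fourierCoeffOn (F : ℝ → ℂ) (k : ℤ) :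
    fhat F k = fourierCoeffOn Real.two_pi_pos F k := by
  rw [fhat, fourierCoeffOn_eq_integral, sub_zero, one_div, Complex.real_smul, Complex.ofReal_inv]
  congr 1
  refine intervalIntegral.integral_congr fun x _ => ?_
  have hpi : (Real.pi : ℂ) ≠ 0 := Complex.ofReal_ne_zero.2 Real.pi_ne_zero
  simp only [fourier_coe_apply, smul_eq_mul]
  rw [mul_comm]
  congr 2
  push_cast
  field_simp

theorem memHs_zero_of_continuous {F : ℝ → ℂ} (hF : Continuous F) : MemHs 0 F where
  intervalIntegrable := hF.intervalIntegrable _ _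
  summable := by
    have hL2 : MeasureTheory.MemLp F 2
        (MeasureTheory.volume.restrict (Set.Ioc 0 (2 * Real.pi))) :=
      (MeasureTheory.memLp_two_iff_integrable_sq_norm hF.aestronglyMeasurable).2
        (hF.norm.pow 2).integrableOn_Ioc
    simpa only [hsCoeff, pow_zero, one_mul, fhat_eq_fourierCoeffOn] using
      (hasSum_sq_fourierCoeffOn Real.two_pi_pos hL2).summable

theorem fhat_deriv {F : ℝ → ℂ} (hF : ContDiff ℝ 1 F) (hper : Function.Periodic F (2 * Real.pi))
    (k : ℤ) : fhat (deriv F) k = Complex.I * k * fhat F k := by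
  let E (x : ℝ) : ℂ := Complex.exp (-Complex.I * k * x)
  have hE (x : ℝ) : HasDerivAt E (E x * (-Complex.I * k)) x := by
    simpa [E] using ((hasDerivAt_id x).ofReal_comp.const_mul (-Complex.I * (k : ℂ))).cexp
  have hF' (x : ℝ) : HasDerivAt F (deriv F x) x := (hF.differentiable one_ne_zero x).hasDerivAt
  have hF_end : F (2 * Real.pi) = F 0 := by simpa using hper 0
  have hE_end : E (2 * Real.pi) = E 0 := by
    simp only [E, Complex.ofReal_zero, mul_zero, Complex.exp_zero, Complex.exp_eq_one_iff]
    exact ⟨-k, by push_cast; ring⟩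
  have hparts := intervalIntegral.integral_mul_deriv_eq_deriv_mul (a := 0) (b := 2 * Real.pi)
    (fun x _ => hF' x) (fun x _ => hE x) ((hF.continuous_deriv le_rfl).intervalIntegrable _ _)
    (Continuous.intervalIntegrable (by fun_prop) _ _)
  rw [hF_end, hE_end, sub_self, zero_sub] at hparts
  simp only [← mul_assoc, intervalIntegral.integral_mul_const] at hparts
  change _ * (∫ x in _.._, deriv F x * E x) = _ * (_ * ∫ x in _.._, F x * E x)
  linear_combination (Complex.ofReal (2 * Real.pi))⁻¹ * hparts

theorem memHs_of_contDiff {n : ℕ} {F : ℝ → ℂ} (hF : ContDiff ℝ n F)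
    (hper : Function.Periodic F (2 * Real.pi)) : MemHs n F := by
  induction n generalizing F with
  | zero => exact memHs_zero_of_continuous hF.continuous
  | succ n ih =>
    have hF' : ContDiff ℝ n (deriv F) := by
      push_cast at hF
      exact (contDiff_succ_iff_deriv.1 hF).2.2
    have hper' : Function.Periodic (deriv F) (2 * Real.pi) := fun x => by
      rw [← deriv_comp_add_const, hper.funext]
    refine ⟨hF.continuous.intervalIntegrable _ _, ?_⟩
    refine ((ih (hF.of_le (mod_cast n.le_succ)) hper).summable.add (ih hF' hper').summable).congr
      fun k => ?_
    have hderiv : ‖fhat (deriv F) k‖ ^ 2 = (k : ℝ) ^ 2 * ‖fhat F k‖ ^ 2 := by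
      rw [fhat_deriv (hF.of_le (by simp)) hper]
      simp [mul_pow]
    rw [hsCoeff_sq, hsCoeff_sq, hsCoeff_sq, hderiv]
    ring

end Sobolev

section MultilinearForm

/-- Absolute convergence of the series defining `Gam p M F`, without which `Gam p M F` is a junk
zero. -/
def GamSummable (p : ℕ) (M : (Fin (p + 1) → ℤ) → ℂ) (F : Fin (p + 1) → ℝ → ℂ) : Prop :=
  Summable fun k : {k : Fin (p + 1) → ℤ // ∑ i, k i = 0} => M k.1 * ∏ i, fhat (F i) (k.1 i)

theorem Gam_sub {p : ℕ} {M N : (Fin (p + 1) → ℤ) → ℂ} {F : Fin (p + 1) → ℝ → ℂ}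
    (hM : GamSummable p M F) (hN : GamSummable p N F) :
    Gam p (fun k => M k - N k) F = Gam p M F - Gam p N F := by
  simp only [Gam, sub_mul]
  exact hM.tsum_sub hN

theorem GamSummable.symmetrize {p : ℕ} {M N : (Fin (p + 1) → ℤ) → ℂ} {F : Fin (p + 1) → ℝ → ℂ}
    (σ : Equiv.Perm (Fin (p + 1))) (hM : GamSummable p M F) (hF : ∀ i, F (σ i) = F i)
    (hN : ∀ k, ∑ i, k i = 0 → N k = (M k + M (k ∘ σ)) / 2) :
    GamSummable p N F ∧ Gam p N F = Gam p M F := by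
  have hperm := (zeroSumPerm σ).hasSum_iff.2 hM.hasSum
  have hprod (k : Fin (p + 1) → ℤ) : ∏ i, fhat (F i) (k (σ i)) = ∏ i, fhat (F i) (k i) := by
    rw [← Equiv.prod_comp σ fun i => fhat (F i) (k i)]
    simp only [hF]
  have hmean (k : {k : Fin (p + 1) → ℤ // ∑ i, k i = 0}) :
      (M k.1 * ∏ i, fhat (F i) (k.1 i) + M (k.1 ∘ σ) * ∏ i, fhat (F i) (k.1 (σ i))) / 2
        = N k.1 * ∏ i, fhat (F i) (k.1 i) := by
    rw [hN k.1 k.2, hprod]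
    ring
  have hsum : HasSum (fun k : {k : Fin (p + 1) → ℤ // ∑ i, k i = 0} =>
      N k.1 * ∏ i, fhat (F i) (k.1 i)) (Gam p M F) := by
    rw [← funext hmean, ← add_self_div_two (Gam p M F)]
    exact (hM.hasSum.add hperm).div_const 2
  exact ⟨hsum.summable, hsum.tsum_eq⟩

/-- The weight `∏ᵢ ⟨kᵢ⟩^{eᵢ} · ⟨k_p⟩^m ⟨k_{p+1}⟩^n`, the product running over the low
frequencies. -/
noncomputable def japMonomial {q : ℕ} (e : Fin q → ℕ) (m n : ℕ) (k : Fin (q + 2) → ℤ) : ℝ :=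
  (∏ i, jap (k i.castSucc.castSucc) ^ e i)
    * (jap (k (Fin.last q).castSucc) ^ m * jap (k (Fin.last (q + 1))) ^ n)

/-- The product of Sobolev norms that bounds the multilinear form with weight
`japMonomial e m n`. -/
noncomputable def sobolevProd {q : ℕ} (e : Fin q → ℕ) (m n : ℕ) (F : Fin (q + 2) → ℝ → ℂ) : ℝ :=
  (∏ i, embeddingConst * hsNormC (e i + 1) (F i.castSucc.castSucc))
    * (hsNormC m (F (Fin.last q).castSucc) * hsNormC n (F (Fin.last (q + 1))))

theorem summable_and_tsum_japMonomial_mul_le {q : ℕ} {e : Fin q → ℕ} {m n : ℕ}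
    {F : Fin (q + 2) → ℝ → ℂ} (hlow : ∀ i, MemHs (e i + 1) (F i.castSucc.castSucc))
    (hpen : MemHs m (F (Fin.last q).castSucc)) (hlast : MemHs n (F (Fin.last (q + 1)))) :
    (Summable fun k : {k : Fin (q + 2) → ℤ // ∑ i, k i = 0} =>
        japMonomial e m n k.1 * ∏ i, ‖fhat (F i) (k.1 i)‖) ∧
      ∑' k : {k : Fin (q + 2) → ℤ // ∑ i, k i = 0},
        japMonomial e m n k.1 * ∏ i, ‖fhat (F i) (k.1 i)‖ ≤ sobolevProd e m n F := by
  have hfactor (k : Fin (q + 2) → ℤ) : japMonomial e m n k * ∏ i, ‖fhat (F i) (k i)‖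
      = (∏ i, hsCoeff (e i) (F i.castSucc.castSucc) (k i.castSucc.castSucc))
        * (hsCoeff m (F (Fin.last q).castSucc) (k (Fin.last q).castSucc)
          * hsCoeff n (F (Fin.last (q + 1))) (k (Fin.last (q + 1)))) := by
    simp only [japMonomial, hsCoeff, Fin.prod_univ_castSucc, Finset.prod_mul_distrib]
    ring
  obtain ⟨hsummable, hle⟩ := summable_and_tsum_zeroSum_prod_mul_le
    (fun i => hsCoeff_nonneg (e i) (F i.castSucc.castSucc))
    (fun i => (hlow i).summable_and_tsum_hsCoeff_le.1)
    (hsCoeff_nonneg m _) hpen.summable (hsCoeff_nonneg n _) hlast.summable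
  simp only [hfactor]
  refine ⟨hsummable, hle.trans ?_⟩
  rw [← hsNormC_eq, ← hsNormC_eq]
  refine mul_le_mul_of_nonneg_right ?_ (mul_nonneg (hsNormC_nonneg m _) (hsNormC_nonneg n _))
  exact Finset.prod_le_prod (fun i _ => tsum_nonneg (hsCoeff_nonneg _ _))
    fun i _ => (hlow i).summable_and_tsum_hsCoeff_le.2

theorem gamSummable_and_norm_Gam_le {ι : Type*} [Fintype ι] {q : ℕ} {M : (Fin (q + 2) → ℤ) → ℂ}
    {F : Fin (q + 2) → ℝ → ℂ} {c : ℝ} {e : ι → Fin q → ℕ} {m n : ℕ} (hc : 0 ≤ c)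
    (hM : ∀ k, ∑ i, k i = 0 → ‖M k‖ ≤ c * ∑ j, japMonomial (e j) m n k)
    (hlow : ∀ j i, MemHs (e j i + 1) (F i.castSucc.castSucc))
    (hpen : MemHs m (F (Fin.last q).castSucc)) (hlast : MemHs n (F (Fin.last (q + 1)))) :
    GamSummable (q + 1) M F ∧ ‖Gam (q + 1) M F‖ ≤ c * ∑ j, sobolevProd (e j) m n F := by
  have hweight (j : ι) := summable_and_tsum_japMonomial_mul_le (hlow j) hpen hlast
  have hmajorant := (hasSum_sum fun j (_ : j ∈ Finset.univ) => (hweight j).1.hasSum).mul_left c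
  have hterm (k : {k : Fin (q + 2) → ℤ // ∑ i, k i = 0}) : ‖M k.1 * ∏ i, fhat (F i) (k.1 i)‖
      ≤ c * ∑ j, japMonomial (e j) m n k.1 * ∏ i, ‖fhat (F i) (k.1 i)‖ := by
    rw [norm_mul, norm_prod, ← Finset.sum_mul, ← mul_assoc]
    exact mul_le_mul_of_nonneg_right (hM k.1 k.2) (Finset.prod_nonneg fun i _ => norm_nonneg _)
  refine ⟨Summable.of_norm_bounded hmajorant.summable hterm,
    (tsum_of_norm_bounded hmajorant hterm).trans ?_⟩
  exact mul_le_mul_of_nonneg_left (Finset.sum_le_sum fun j _ => (hweight j).2) hc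

end MultilinearForm

section ArgumentTuple

variable {q : ℕ} (F G : ℝ → ℂ)

@[simp]
theorem tup_castSucc_castSucc (i : Fin q) : tup (q + 1) F G i.castSucc.castSucc = F := by
  simp [tup]

@[simp]
theorem tup_castSucc_last : tup (q + 1) F G (Fin.last q).castSucc = G := by simp [tup]

@[simp]
theorem tup_last : tup (q + 1) F G (Fin.last (q + 1)) = G := by simp [tup]

theorem tup_swapHigh (i : Fin (q + 2)) :
    tup (q + 1) F G (swapHigh q i) = tup (q + 1) F G i := by
  refine Fin.lastCases (by simp) (fun i => ?_) i
  refine Fin.lastCases (by simp) (fun i => ?_) i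
  rw [swapHigh_apply_of_lt (by simp)]

end ArgumentTuple

section LowFrequencySymbol

theorem ksum1_succ {q : ℕ} (k : Fin (q + 2) → ℤ) :
    ksum1 (q + 1) k = ∑ i : Fin q, k i.castSucc.castSucc := by
  simp [ksum1, Finset.sum_filter, Fin.sum_univ_castSucc]

theorem ksum1_add_add_eq_zero {q : ℕ} {k : Fin (q + 2) → ℤ} (hk : ∑ i, k i = 0) :
    ksum1 (q + 1) k + k (Fin.last q).castSucc + k (Fin.last (q + 1)) = 0 := by
  rwa [ksum1_succ, ← Fin.sum_univ_castSucc fun i : Fin (q + 1) => k i.castSucc,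
    ← Fin.sum_univ_castSucc]

theorem norm_Dabc_le {q a b c : ℕ} (h : a + b + c ≤ q) (k : Fin (q + 2) → ℤ) :
    ‖Dabc (q + 1) a b c k‖ ≤ ∏ i : Fin q, jap (k i.castSucc.castSucc) ^ 3 := by
  have hlow : ∏ i : Fin q, jap (k i.castSucc.castSucc) ^ 3
      = ∏ i : Fin (q + 2), if (i : ℕ) < q then jap (k i) ^ 3 else 1 := by
    simp [Fin.prod_univ_castSucc]
  rw [hlow, Dabc, Finset.prod_filter, Finset.prod_filter, Finset.prod_filter,
    ← Finset.prod_mul_distrib, ← Finset.prod_mul_distrib, norm_prod]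
  refine Finset.prod_le_prod (fun _ _ => norm_nonneg _) fun i _ => ?_
  have hpow {m : ℕ} (hm : m ≤ 3) := norm_I_mul_pow_le_jap_pow (k i) hm
  rcases lt_or_ge (i : ℕ) a with ha | ha
  · simpa [ha, ha.not_ge, show ¬ a + b ≤ (i : ℕ) by omega, show (i : ℕ) < q by omega]
      using hpow le_rfl
  rcases lt_or_ge (i : ℕ) (a + b) with hb | hb
  · simpa [ha, ha.not_gt, hb, hb.not_ge, show (i : ℕ) < q by omega] using hpow (m := 2) (by simp)
  rcases lt_or_ge (i : ℕ) (a + b + c) with hc | hc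
  · simpa [ha.not_gt, hb, hb.not_gt, hc, show (i : ℕ) < q by omega] using hpow (m := 1) (by simp)
  · simp only [ha.not_gt, hb.not_gt, hc.not_gt, if_false, and_false, mul_one, norm_one]
    split_ifs
    exacts [one_le_pow₀ (one_le_jap _), le_rfl]

theorem Dabc_comp_swapHigh {q a b c : ℕ} (h : a + b + c ≤ q) (k : Fin (q + 2) → ℤ) :
    Dabc (q + 1) a b c (k ∘ swapHigh q) = Dabc (q + 1) a b c k := by
  have hfix (i : Fin (q + 2)) (hi : (i : ℕ) < a + b + c) : (k ∘ swapHigh q) i = k i := by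
    rw [Function.comp_apply, swapHigh_apply_of_lt (hi.trans_le h)]
  unfold Dabc
  congr 1
  · congr 1 <;> refine Finset.prod_congr rfl fun i hi => ?_ <;>
      rw [hfix i (by have := (Finset.mem_filter.1 hi).2; omega)]
  · exact Finset.prod_congr rfl fun i hi => by rw [hfix i (Finset.mem_filter.1 hi).2.2]

end LowFrequencySymbol

section Symmetrization

variable {q : ℕ}

/-- The multiplier `(ik_p)^{s+2} (ik_{p+1})^{s+1} m(k)`, for `p = q + 1`. -/
noncomputable def topMult (s : ℕ) (m : (Fin (q + 2) → ℤ) → ℂ) (k : Fin (q + 2) → ℤ) : ℂ :=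
  (Complex.I * k (Fin.last q).castSucc) ^ (s + 2) * (Complex.I * k (Fin.last (q + 1))) ^ (s + 1)
    * m k

/-- The multiplier `−½ (ik_{(1,p-1)}) (ik_p)^{s+1} (ik_{p+1})^{s+1} m(k)`, for `p = q + 1`. -/
noncomputable def symmMult (s : ℕ) (m : (Fin (q + 2) → ℤ) → ℂ) (k : Fin (q + 2) → ℤ) : ℂ :=
  -(1 / 2 : ℂ) * (Complex.I * ksum1 (q + 1) k) * (Complex.I * k (Fin.last q).castSucc) ^ (s + 1)
    * (Complex.I * k (Fin.last (q + 1))) ^ (s + 1) * m k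

theorem symmMult_eq_topMult_add_div_two (s : ℕ) {m : (Fin (q + 2) → ℤ) → ℂ}
    (hm : ∀ k, m (k ∘ swapHigh q) = m k) {k : Fin (q + 2) → ℤ} (hk : ∑ i, k i = 0) :
    symmMult s m k = (topMult s m k + topMult s m (k ∘ swapHigh q)) / 2 := by
  have hksum : (ksum1 (q + 1) k : ℂ) = -(k (Fin.last q).castSucc + k (Fin.last (q + 1))) := by
    have hzero : (ksum1 (q + 1) k : ℂ) + k (Fin.last q).castSucc + k (Fin.last (q + 1)) = 0 :=
      mod_cast ksum1_add_add_eq_zero hk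
    linear_combination hzero
  simp only [symmMult, topMult, hm, hksum, Function.comp_apply, Equiv.swap_apply_left,
    Equiv.swap_apply_right]
  ring

theorem norm_topMult_le {s : ℕ} {m : (Fin (q + 2) → ℤ) → ℂ} {A : ℝ} {k : Fin (q + 2) → ℤ}
    (hm : ‖m k‖ ≤ A * ∏ i : Fin q, jap (k i.castSucc.castSucc) ^ 3) :
    ‖topMult s m k‖ ≤ A * japMonomial (fun _ => 3) (s + 2) (s + 1) k := by
  have hhigh := mul_le_mul (norm_I_mul_pow_le_jap_pow (k (Fin.last q).castSucc) (le_refl (s + 2)))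
    (norm_I_mul_pow_le_jap_pow (k (Fin.last (q + 1))) (le_refl (s + 1))) (norm_nonneg _)
    (jap_pow_nonneg _ _)
  rw [topMult, japMonomial, norm_mul, norm_mul, ← mul_assoc, mul_comm]
  exact mul_le_mul hm hhigh (by positivity) ((norm_nonneg _).trans hm)

theorem gamSummable_symmMult_and_Gam_eq {s : ℕ} {m : (Fin (q + 2) → ℤ) → ℂ} {A : ℝ} (hA : 0 ≤ A)
    (hm : ∀ k, ‖m k‖ ≤ A * ∏ i : Fin q, jap (k i.castSucc.castSucc) ^ 3)
    (hswap : ∀ k, m (k ∘ swapHigh q) = m k) {F G : ℝ → ℂ} (hF : MemHs 4 F) (hG : MemHs (s + 2) G) :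
    GamSummable (q + 1) (symmMult s m) (tup (q + 1) F G) ∧
      Gam (q + 1) (symmMult s m) (tup (q + 1) F G)
        = Gam (q + 1) (topMult s m) (tup (q + 1) F G) := by
  have htop : GamSummable (q + 1) (topMult s m) (tup (q + 1) F G) :=
    (gamSummable_and_norm_Gam_le (ι := Unit) (e := fun _ _ => 3) (m := s + 2) (n := s + 1) hA
      (fun k _ => by simpa using norm_topMult_le (s := s) (hm k)) (fun _ i => by simpa using hF)
      (by simpa using hG) (by simpa using hG.mono (by omega))).1
  exact htop.symmetrize (swapHigh q) (tup_swapHigh F G)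
    fun k hk => symmMult_eq_topMult_add_div_two s hswap hk

end Symmetrization

section HighFrequencyCutoff

theorem fmax_nonneg {α : Type*} (t : Finset α) (f : α → ℝ) : 0 ≤ fmax t f := NNReal.coe_nonneg _

theorem fmax_le {α : Type*} {t : Finset α} {f : α → ℝ} {u : ℝ} (hu : 0 ≤ u)
    (h : ∀ i ∈ t, f i ≤ u) : fmax t f ≤ u := by
  rw [fmax, ← Real.le_toNNReal_iff_coe_le hu]
  exact Finset.sup_le fun i hi => Real.toNNReal_le_toNNReal (h i hi)

theorem sq_le_cube_of_rpow_le {x u : ℝ} (hu : 1 ≤ u) (h : |x| ^ ((4 : ℝ) / 5) ≤ u) :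
    x ^ 2 ≤ u ^ 3 := by
  calc x ^ 2 = (|x| ^ ((4 : ℝ) / 5)) ^ ((5 : ℝ) / 2) := by
        rw [← Real.rpow_mul (abs_nonneg x), ← sq_abs]
        norm_num
    _ ≤ u ^ ((5 : ℝ) / 2) := by gcongr
    _ ≤ u ^ (3 : ℝ) := Real.rpow_le_rpow_of_exponent_le hu (by norm_num)
    _ = u ^ 3 := Real.rpow_ofNat u 3

theorem abs_mul_mul_le {K x y u : ℝ} (hu : 1 ≤ u) (hK : |K| ≤ u) (hsum : K + x + y = 0)
    (h : min (|x| ^ ((4 : ℝ) / 5)) (|y| ^ ((4 : ℝ) / 5)) ≤ u) : |K * x * y| ≤ 2 * u ^ 4 := by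
  wlog hx : |x| ^ ((4 : ℝ) / 5) ≤ u generalizing x y
  · rw [mul_right_comm]
    exact this (by linarith) (by rwa [min_comm]) ((min_le_iff.1 h).resolve_left hx)
  have hx2 : x ^ 2 ≤ u ^ 3 := sq_le_cube_of_rpow_le hu hx
  have hK2 : K ^ 2 ≤ u ^ 3 :=
    (sq_le_sq' (abs_le.1 hK).1 (abs_le.1 hK).2).trans (pow_le_pow_right₀ hu (by norm_num))
  have hxy : |x * y| ≤ 2 * u ^ 3 := by
    rw [show y = -(K + x) by linarith, abs_le]
    constructor <;> nlinarith [sq_nonneg (x + K), sq_nonneg (x - K)]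
  calc |K * x * y| = |K| * |x * y| := by rw [mul_assoc, abs_mul]
    _ ≤ u * (2 * u ^ 3) := by gcongr
    _ = 2 * u ^ 4 := by ring

/-- The constant in the bound of the multiplier removed by the cut-offs `M_H M_NZ`. -/
noncomputable def cutoffConst (C₀ : ℝ) (q : ℕ) : ℝ := (1 + |C₀| + q) ^ 4

theorem cutoffConst_nonneg (C₀ : ℝ) (q : ℕ) : 0 ≤ cutoffConst C₀ q := by
  unfold cutoffConst
  positivity

theorem abs_ksum1_mul_mul_le {C₀ v : ℝ} {q : ℕ} {k : Fin (q + 2) → ℤ} (hk : ∑ i, k i = 0)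
    (hv : 1 ≤ v) (hlow : ∀ i : Fin q, |(k i.castSucc.castSucc : ℝ)| ≤ v)
    (hcut : MH C₀ (q + 1) k = 0) :
    |(ksum1 (q + 1) k * k (Fin.last q).castSucc * k (Fin.last (q + 1)) : ℝ)|
      ≤ 2 * cutoffConst C₀ q * v ^ 4 := by
  have hK : |(ksum1 (q + 1) k : ℝ)| ≤ q * v := by
    rw [ksum1_succ, Int.cast_sum]
    refine (Finset.abs_sum_le_sum_abs _ _).trans ((Finset.sum_le_sum fun i _ => hlow i).trans ?_)
    simp
  have hfmax : fmax (Finset.univ.filter fun i : Fin (q + 2) => (i : ℕ) < q)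
      (fun i => |(k i : ℝ)|) ≤ v :=
    fmax_le (by positivity) fun i hi => hlow ⟨i, (Finset.mem_filter.1 hi).2⟩
  have hmin : min (|(k (Fin.last q).castSucc : ℝ)| ^ ((4 : ℝ) / 5))
      (|(k (Fin.last (q + 1)) : ℝ)| ^ ((4 : ℝ) / 5)) ≤ |C₀| * v :=
    (not_le.1 fun h => one_ne_zero ((if_pos h).symm.trans hcut)).le.trans
      (mul_le_mul (le_abs_self C₀) hfmax (fmax_nonneg _ _) (abs_nonneg C₀))
  have hqv : 0 ≤ q * v := by positivity
  have hCv : 0 ≤ |C₀| * v := by positivity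
  have hsum : (ksum1 (q + 1) k : ℝ) + k (Fin.last q).castSucc + k (Fin.last (q + 1)) = 0 :=
    mod_cast ksum1_add_add_eq_zero hk
  have hmul := abs_mul_mul_le (u := (1 + |C₀| + q) * v) (by linarith) (by linarith) hsum
    (hmin.trans (by linarith))
  rwa [mul_pow, ← mul_assoc] at hmul

theorem norm_mul_one_sub_cutoff_le (C₀ : ℝ) {q : ℕ} {k : Fin (q + 2) → ℤ} (hk : ∑ i, k i = 0) :
    ‖(ksum1 (q + 1) k * k (Fin.last q).castSucc * k (Fin.last (q + 1)) : ℂ)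
        * (1 - MH C₀ (q + 1) k * MNZ (q + 1) k)‖
      ≤ 2 * cutoffConst C₀ q * ∑ j : Fin q, jap (k j.castSucc.castSucc) ^ 4 := by
  have hconst : 0 ≤ 2 * cutoffConst C₀ q := mul_nonneg zero_le_two (cutoffConst_nonneg C₀ q)
  have hbound : 0 ≤ 2 * cutoffConst C₀ q * ∑ j : Fin q, jap (k j.castSucc.castSucc) ^ 4 :=
    mul_nonneg hconst (Finset.sum_nonneg fun j _ => jap_pow_nonneg _ 4)
  by_cases hK : ksum1 (q + 1) k = 0
  · simpa [hK] using hbound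
  rw [MNZ, if_pos hK, mul_one]
  have hMH : MH C₀ (q + 1) k = 1 ∨ MH C₀ (q + 1) k = 0 := ite_eq_or_eq _ _ _
  rcases hMH with hcut | hcut
  · simpa [hcut] using hbound
  have hlow : (Finset.univ : Finset (Fin q)).Nonempty := by
    rw [ksum1_succ] at hK
    exact Finset.nonempty_of_sum_ne_zero hK
  obtain ⟨j, -, hmax⟩ := Finset.exists_max_image _ (fun i => |(k i.castSucc.castSucc : ℝ)|) hlow
  have hremoved := abs_ksum1_mul_mul_le hk (one_le_jap (k j.castSucc.castSucc))
    (fun i => (hmax i (Finset.mem_univ i)).trans (abs_le_jap _)) hcut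
  have hsingle : jap (k j.castSucc.castSucc) ^ 4 ≤ ∑ j : Fin q, jap (k j.castSucc.castSucc) ^ 4 :=
    Finset.single_le_sum (f := fun j : Fin q => jap (k j.castSucc.castSucc) ^ 4)
      (fun j _ => jap_pow_nonneg _ 4) (Finset.mem_univ j)
  have hnorm : ‖(ksum1 (q + 1) k * k (Fin.last q).castSucc * k (Fin.last (q + 1)) : ℂ)‖
      = |(ksum1 (q + 1) k * k (Fin.last q).castSucc * k (Fin.last (q + 1)) : ℝ)| := by
    simp [abs_mul]
  rw [hcut, sub_zero, mul_one, hnorm]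
  exact hremoved.trans (mul_le_mul_of_nonneg_left hsingle hconst)

end HighFrequencyCutoff

section Remainder

variable {q : ℕ}

theorem prod_apply_update {ι β M : Type*} [Fintype ι] [DecidableEq ι] [CommMonoid M]
    (f : ι → β → M) (e : ι → β) (j : ι) (b : β) :
    ∏ i, f i (Function.update e j b i) = f j b * ∏ i ∈ Finset.univ.erase j, f i (e i) := by
  rw [← Finset.mul_prod_erase _ _ (Finset.mem_univ j), Function.update_self]
  congr 1
  exact Finset.prod_congr rfl fun i hi => by rw [Function.update_of_ne (Finset.ne_of_mem_erase hi)]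

theorem japMonomial_update_add (e : Fin q → ℕ) (j : Fin q) (r m n : ℕ) (k : Fin (q + 2) → ℤ) :
    japMonomial (Function.update e j (e j + r)) m n k
      = jap (k j.castSucc.castSucc) ^ r * japMonomial e m n k := by
  rw [japMonomial, japMonomial,
    prod_apply_update fun (i : Fin q) (l : ℕ) => jap (k i.castSucc.castSucc) ^ l,
    ← Finset.mul_prod_erase Finset.univ (fun i => jap (k i.castSucc.castSucc) ^ e i)
      (Finset.mem_univ j), pow_add]
  ring

theorem sobolevProd_update_tup (j : Fin q) (r t m n : ℕ) (F G : ℝ → ℂ) :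
    sobolevProd (Function.update (fun _ => r) j t) m n (tup (q + 1) F G)
      = embeddingConst ^ q * hsNormC (r + 1) F ^ (q - 1) * hsNormC (t + 1) F
        * (hsNormC m G * hsNormC n G) := by
  simp only [sobolevProd, tup_castSucc_castSucc, tup_castSucc_last, tup_last,
    Finset.prod_mul_distrib, prod_apply_update fun _ l => hsNormC (l + 1) F, Finset.prod_const,
    Finset.card_erase_of_mem (Finset.mem_univ j), Finset.card_univ, Fintype.card_fin]
  ring

theorem norm_symmMult_mul_one_sub_cutoff_le {s : ℕ} {m : (Fin (q + 2) → ℤ) → ℂ} {A : ℝ} (C₀ : ℝ)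
    {k : Fin (q + 2) → ℤ} (hk : ∑ i, k i = 0)
    (hm : ‖m k‖ ≤ A * ∏ i : Fin q, jap (k i.castSucc.castSucc) ^ 3) :
    ‖symmMult s m k * (1 - MH C₀ (q + 1) k * MNZ (q + 1) k)‖
      ≤ A * cutoffConst C₀ q * ∑ j, japMonomial (Function.update (fun _ => 3) j 7) s s k := by
  have hcut := norm_mul_one_sub_cutoff_le C₀ hk
  have hhigh := mul_le_mul (norm_I_mul_pow_le_jap_pow (k (Fin.last q).castSucc) (le_refl s))
    (norm_I_mul_pow_le_jap_pow (k (Fin.last (q + 1))) (le_refl s)) (norm_nonneg _)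
    (jap_pow_nonneg _ _)
  have hfactor : symmMult s m k * (1 - MH C₀ (q + 1) k * MNZ (q + 1) k)
      = Complex.I / 2 * (ksum1 (q + 1) k * k (Fin.last q).castSucc * k (Fin.last (q + 1))
          * (1 - MH C₀ (q + 1) k * MNZ (q + 1) k))
        * (m k * ((Complex.I * k (Fin.last q).castSucc) ^ s
          * (Complex.I * k (Fin.last (q + 1))) ^ s)) := by
    simp only [symmMult, pow_succ _ s]
    linear_combination (-1 / 2 * Complex.I * ksum1 (q + 1) k * k (Fin.last q).castSucc
      * k (Fin.last (q + 1)) * (1 - MH C₀ (q + 1) k * MNZ (q + 1) k) * m k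
      * (Complex.I * k (Fin.last q).castSucc) ^ s
      * (Complex.I * k (Fin.last (q + 1))) ^ s) * Complex.I_sq
  have hmonomial (j : Fin q) : japMonomial (Function.update (fun _ => 3) j 7) s s k
      = jap (k j.castSucc.castSucc) ^ 4 * japMonomial (fun _ => 3) s s k :=
    japMonomial_update_add (fun _ => 3) j 4 s s k
  simp only [hmonomial, ← Finset.sum_mul]
  calc ‖symmMult s m k * (1 - MH C₀ (q + 1) k * MNZ (q + 1) k)‖
      ≤ 1 / 2 * (2 * cutoffConst C₀ q * ∑ j : Fin q, jap (k j.castSucc.castSucc) ^ 4)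
        * (A * (∏ i : Fin q, jap (k i.castSucc.castSucc) ^ 3)
          * (jap (k (Fin.last q).castSucc) ^ s * jap (k (Fin.last (q + 1))) ^ s)) := by
        rw [hfactor, norm_mul, norm_mul, norm_mul (m k), norm_mul (_ ^ s)]
        gcongr
        exacts [mul_nonneg one_half_pos.le ((norm_nonneg _).trans hcut), by simp,
          (norm_nonneg _).trans hm]
    _ = _ := by rw [japMonomial]; ring

theorem norm_Gam_topMult_sub_Gam_symmMult_le {s : ℕ} {m : (Fin (q + 2) → ℤ) → ℂ} {A : ℝ}
    (hA : 0 ≤ A) (hm : ∀ k, ‖m k‖ ≤ A * ∏ i : Fin q, jap (k i.castSucc.castSucc) ^ 3)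
    (hswap : ∀ k, m (k ∘ swapHigh q) = m k) (C₀ : ℝ) {F G : ℝ → ℂ} (hF : MemHs 8 F)
    (hG : MemHs (s + 2) G) :
    ‖Gam (q + 1) (topMult s m) (tup (q + 1) F G)
        - Gam (q + 1) (fun k => symmMult s m k * (MH C₀ (q + 1) k * MNZ (q + 1) k))
          (tup (q + 1) F G)‖
      ≤ A * cutoffConst C₀ q * (q * embeddingConst ^ q)
        * hsNormC 4 F ^ (q - 1) * hsNormC 8 F * hsNormC s G ^ 2 := by
  have hF4 : MemHs 4 F := hF.mono (by norm_num)
  have hGs : MemHs s G := hG.mono (by omega)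
  obtain ⟨hsymm, hsymm_eq⟩ := gamSummable_symmMult_and_Gam_eq hA hm hswap hF4 hG
  obtain ⟨hrem, hrem_le⟩ := gamSummable_and_norm_Gam_le
    (F := tup (q + 1) F G) (mul_nonneg hA (cutoffConst_nonneg C₀ q))
    (fun k hk => norm_symmMult_mul_one_sub_cutoff_le (s := s) C₀ hk (hm k))
    (fun j i => by
      rw [tup_castSucc_castSucc]
      rcases eq_or_ne i j with rfl | hij
      · simpa using hF
      · simpa [hij] using hF4)
    (by simpa using hGs) (by simpa using hGs)
  have hkept := Gam_sub hsymm hrem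
  simp only [mul_one_sub, sub_sub_cancel] at hkept
  rw [← hsymm_eq, hkept]
  simp only [mul_one_sub, sub_sub_cancel] at hrem_le ⊢
  refine hrem_le.trans_eq ?_
  simp only [sobolevProd_update_tup, Finset.sum_const, Finset.card_univ, Fintype.card_fin,
    nsmul_eq_mul]
  ring

end Remainder

theorem contDiff_cF {f : ℝ → ℝ} {n : WithTop ℕ∞} (hf : ContDiff ℝ n f) : ContDiff ℝ n (cF f) :=
  Complex.ofRealCLM.contDiff.comp hf

theorem memHs_cF {f : ℝ → ℝ} {n : ℕ} (hf : ContDiff ℝ n f)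
    (hper : Function.Periodic f (2 * Real.pi)) : MemHs n (cF f) :=
  memHs_of_contDiff (contDiff_cF hf) fun x => by rw [cF, cF, hper x]

theorem lem_ga1_general (s : ℕ) (lam : ℂ) (a b c p : ℕ) (hp : a + b + c ≤ p) (ha : 1 ≤ a)
    (C₀ : ℝ) :
    ∃ C : ℝ, 0 < C ∧ ∀ F G : ℝ → ℂ, MemHs 8 F → MemHs (s + 2) G →
      ‖Gam p (fun k => lam * (a : ℂ)
            * (Complex.I * (k (⟨p - 1, by omega⟩ : Fin (p + 1)) : ℂ)) ^ (s + 2)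
            * (Complex.I * (k (Fin.last p) : ℂ)) ^ (s + 1)
            * Dabc p (a - 1) b c k)
          (tup p F G)
        - Gam p (fun k => -(1/2 : ℂ) * lam * (a : ℂ)
            * (Complex.I * (ksum1 p k : ℂ))
            * (Complex.I * (k (⟨p - 1, by omega⟩ : Fin (p + 1)) : ℂ)) ^ (s + 1)
            * (Complex.I * (k (Fin.last p) : ℂ)) ^ (s + 1)
            * Dabc p (a - 1) b c k * MH C₀ p k * MNZ p k)
          (tup p F G)‖
      ≤ C * hsNormC 4 F ^ (p - 2) * hsNormC 8 F * hsNormC s G ^ 2 := by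
  obtain ⟨q, rfl⟩ : ∃ q, p = q + 1 := ⟨p - 1, by omega⟩
  have hD : a - 1 + b + c ≤ q := by omega
  let m (k : Fin (q + 2) → ℤ) : ℂ := lam * a * Dabc (q + 1) (a - 1) b c k
  have hm (k) : ‖m k‖ ≤ ‖lam * a‖ * ∏ i : Fin q, jap (k i.castSucc.castSucc) ^ 3 :=
    (norm_mul _ _).trans_le (mul_le_mul_of_nonneg_left (norm_Dabc_le hD k) (norm_nonneg _))
  have hswap (k) : m (k ∘ swapHigh q) = m k := by simp only [m, Dabc_comp_swapHigh hD]
  have hpos : 0 ≤ ‖lam * a‖ * cutoffConst C₀ q * (q * embeddingConst ^ q) :=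
    mul_nonneg (mul_nonneg (norm_nonneg _) (cutoffConst_nonneg C₀ q))
      (mul_nonneg q.cast_nonneg (pow_nonneg embeddingConst_nonneg q))
  refine ⟨_, lt_add_of_nonneg_of_lt hpos one_pos, fun F G hF hG => ?_⟩
  have hmain := norm_Gam_topMult_sub_Gam_symmMult_le (norm_nonneg _) hm hswap C₀ hF hG
  have htop : topMult s m = fun k => lam * a * (Complex.I * k (Fin.last q).castSucc) ^ (s + 2)
      * (Complex.I * k (Fin.last (q + 1))) ^ (s + 1) * Dabc (q + 1) (a - 1) b c k := by
    funext k
    simp only [topMult, m]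
    ring
  have hsymm : (fun k => symmMult s m k * (MH C₀ (q + 1) k * MNZ (q + 1) k))
      = fun k => -(1 / 2 : ℂ) * lam * a * (Complex.I * ksum1 (q + 1) k)
        * (Complex.I * k (Fin.last q).castSucc) ^ (s + 1)
        * (Complex.I * k (Fin.last (q + 1))) ^ (s + 1)
        * Dabc (q + 1) (a - 1) b c k * MH C₀ (q + 1) k * MNZ (q + 1) k := by
    funext k
    simp only [symmMult, m]
    ring
  rw [htop, hsymm] at hmain
  rw [show q + 1 - 2 = q - 1 by omega]
  refine hmain.trans ?_
  have h4 := hsNormC_nonneg 4 F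
  have h8 := hsNormC_nonneg 8 F
  gcongr
  exact le_add_of_nonneg_right zero_le_one

/-- **Lemma lem_ga1.** For real-valued smooth `2π`-periodic `f, g` and
`M_{1,*} = −(1/2)λ_j a_j (ik_{(1,p_j-1)})(ik_{p_j})^{s+1}(ik_{p_j+1})^{s+1}D_{a_j-1,b_j,c_j}M_H M_NZ`:
`|Γ^{(p_j)}(λ_j a_j (ik_{p_j})^{s+2}(ik_{p_j+1})^{s+1}D_{a_j-1,b_j,c_j}; f,…,f,g,g)
  − Γ^{(p_j)}(M_{1,*}; f,…,f,g,g)| ≲ ‖f‖_{H⁴}^{p_j−2} ‖f‖_{H⁸} ‖g‖_{H^s}²`. -/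
theorem lem_ga1 (s : ℕ) (lam : ℝ) (a b c d : ℕ) (p : ℕ) (hpdef : p = a + b + c + d)
    (hp2 : 2 ≤ p) (ha : 1 ≤ a) (C₀ : ℝ) (hC₀ : 0 < C₀) :
    ∃ C : ℝ, 0 < C ∧ ∀ f g : ℝ → ℝ,
      ContDiff ℝ (⊤ : ℕ∞) f → Function.Periodic f (2 * Real.pi) →
      ContDiff ℝ (⊤ : ℕ∞) g → Function.Periodic g (2 * Real.pi) →
      ‖Gam p (fun k => (lam : ℂ) * (a : ℂ)
            * (Complex.I * (k (⟨p - 1, by omega⟩ : Fin (p + 1)) : ℂ)) ^ (s + 2)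
            * (Complex.I * (k (Fin.last p) : ℂ)) ^ (s + 1)
            * Dabc p (a - 1) b c k)
          (tup p (cF f) (cF g))
        - Gam p (fun k => -(1/2 : ℂ) * (lam : ℂ) * (a : ℂ)
            * (Complex.I * (ksum1 p k : ℂ))
            * (Complex.I * (k (⟨p - 1, by omega⟩ : Fin (p + 1)) : ℂ)) ^ (s + 1)
            * (Complex.I * (k (Fin.last p) : ℂ)) ^ (s + 1)
            * Dabc p (a - 1) b c k * MH C₀ p k * MNZ p k)
          (tup p (cF f) (cF g))‖
      ≤ C * hsNormC 4 (cF f) ^ (p - 2) * hsNormC 8 (cF f) * hsNormC s (cF g) ^ 2 := by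
  obtain ⟨C, hC, h⟩ := lem_ga1_general s lam a b c p (by omega) ha C₀
  exact ⟨C, hC, fun f g hf hfper hg hgper =>
    h _ _ (memHs_cF (contDiff_infty.1 hf 8) hfper) (memHs_cF (contDiff_infty.1 hg _) hgper)⟩

end FifthOrderStmt16
end

section
/- Let s ∈ ℕ∪{0}, let j be an index with data (λ_j, a_j, b_j, c_j, d_j) and p_j := a_j+b_j+c_j+d_j ≥ 2, and assume b_j ≥ 1. Set M_{2,*} := λ_j b_j (ik_{p_j})^{s+1}(ik_{p_j+1})^{s+1} D_{a_j,b_j−1,c_j} M_H^{(p_j)} M_NZ^{(p_j)}. Then there exists C > 0 (depending on s, p_j, λ_j and the constant C₀ in M_H) such that for all real-valued f, g ∈ C^∞(𝕋): |Γ^{(p_j)}(λ_j b_j (ik_{p_j})^{s+1}(ik_{p_j+1})^{s+1} D_{a_j,b_j−1,c_j}; f,…,f,g,g) − P_{N_j}(f) ‖∂_x^{s+1} g‖_{L²}² − Γ^{(p_j)}(M_{2,*}; f,…,f,g,g)| ≤ C ‖f‖_{H⁴}^{p_j−2} ‖f‖_{H⁷} ‖g‖_{H^s}², where the first p_j−1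 arguments are f, the last two are g, and ‖∂_x^{s+1}g‖_{L²}² = Σ_{k∈ℤ} k^{2(s+1)}|ĝ(k)|². -/
/- Lemma lem_ga23 (first part): normal form reduction for the D_{a,b-1,c} part,
   producing the resonant term P_{N_j}(f)‖∂_x^{s+1}g‖_{L²}². -/

namespace FifthOrderStmt17

open scoped NNReal Classical

/-- Maximum of a nonnegative real-valued family over a finset (`0` if the finset is empty). -/
noncomputable def fmax {α : Type*} (s : Finset α) (f : α → ℝ) : ℝ :=
  ((s.sup fun i => Real.toNNReal (f i) : ℝ≥0) : ℝ)

/-- Fourier coefficient of a `2π`-periodic function `f : ℝ → ℂ`: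
`f̂(k) = (1/2π) ∫_0^{2π} f(x) e^{-ikx} dx`. -/
noncomputable def fhat (f : ℝ → ℂ) (k : ℤ) : ℂ :=
  (Complex.ofReal (2 * Real.pi))⁻¹ *
    ∫ x in (0:ℝ)..(2 * Real.pi), f x * Complex.exp (-Complex.I * (k : ℂ) * (x : ℂ))

/-- The multilinear form
`Γ^(p)(M; f₁,…,f_{p+1}) = Σ_{k ∈ Z₀^(p)} M(k) ∏_{l=1}^{p+1} f̂_l(k_l)`,
where `Z₀^(p) = {k ∈ ℤ^{p+1} : k₁ + ⋯ + k_{p+1} = 0}` (indices shifted to start at `0`). -/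
noncomputable def Gam (p : ℕ) (M : (Fin (p + 1) → ℤ) → ℂ) (F : Fin (p + 1) → ℝ → ℂ) : ℂ :=
  ∑' k : {k : Fin (p + 1) → ℤ // (∑ i, k i) = 0}, M k.1 * ∏ i, fhat (F i) (k.1 i)

/-- The argument tuple `(f, …, f, g, g)`: `p − 1` copies of `f` followed by two copies of `g`. -/
def tup (p : ℕ) (f g : ℝ → ℂ) : Fin (p + 1) → ℝ → ℂ :=
  fun i => if (i : ℕ) < p - 1 then f else g

/-- Sobolev norm `‖f‖_{H^s} = (Σ_k (1+k²)^s |f̂(k)|²)^{1/2}`. -/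
noncomputable def hsNormC (s : ℕ) (f : ℝ → ℂ) : ℝ :=
  Real.sqrt (∑' k : ℤ, (1 + (k : ℝ) ^ 2) ^ s * ‖fhat f k‖ ^ 2)

/-- `‖∂_x^m f‖_{L²}² = Σ_k k^{2m} |f̂(k)|²`. -/
noncomputable def dxNormSq (m : ℕ) (f : ℝ → ℂ) : ℝ :=
  ∑' k : ℤ, (k : ℝ) ^ (2 * m) * ‖fhat f k‖ ^ 2

/-- Complexification of a real-valued function. -/
def cF (f : ℝ → ℝ) : ℝ → ℂ := fun x => (f x : ℂ)

/-- `k_{(1,p-1)} = k₁ + ⋯ + k_{p-1}` (with indices shifted to start at `0`). -/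
def ksum1 (p : ℕ) (k : Fin (p + 1) → ℤ) : ℤ :=
  ∑ i ∈ Finset.univ.filter (fun i : Fin (p + 1) => (i : ℕ) < p - 1), k i

/-- The high-frequency cut-off `M_H^(p)` with constant `C₀`:
`1` when `min{|k_p|^{4/5}, |k_{p+1}|^{4/5}} ≥ C₀ max{|k₁|,…,|k_{p-1}|}`, else `0`. -/
noncomputable def MH (C₀ : ℝ) (p : ℕ) (k : Fin (p + 1) → ℤ) : ℂ :=
  if C₀ * fmax (Finset.univ.filter (fun i : Fin (p + 1) => (i : ℕ) < p - 1))
        (fun i => |(k i : ℝ)|)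
      ≤ min (|(k (⟨p - 1, by omega⟩ : Fin (p + 1)) : ℝ)| ^ ((4:ℝ)/5))
            (|(k (Fin.last p) : ℝ)| ^ ((4:ℝ)/5))
  then 1 else 0

/-- The non-zero-sum cut-off `M_NZ^(p)`: `1` when `k_{(1,p-1)} ≠ 0`, else `0`. -/
def MNZ (p : ℕ) (k : Fin (p + 1) → ℤ) : ℂ :=
  if ksum1 p k ≠ 0 then 1 else 0

/-- `D_{a,b,c}(k) = ∏_{l=1}^{a}(ik_l)³ ∏_{l=a+1}^{a+b}(ik_l)² ∏_{l=a+b+1}^{a+b+c}(ik_l)`. -/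
noncomputable def Dabc (p a b c : ℕ) (k : Fin (p + 1) → ℤ) : ℂ :=
  (∏ i ∈ Finset.univ.filter (fun i : Fin (p + 1) => (i : ℕ) < a),
      (Complex.I * (k i : ℂ)) ^ 3)
    * (∏ i ∈ Finset.univ.filter (fun i : Fin (p + 1) => a ≤ (i : ℕ) ∧ (i : ℕ) < a + b),
        (Complex.I * (k i : ℂ)) ^ 2)
    * (∏ i ∈ Finset.univ.filter
          (fun i : Fin (p + 1) => a + b ≤ (i : ℕ) ∧ (i : ℕ) < a + b + c),
        (Complex.I * (k i : ℂ)))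

/-- The multiplier
`M_{NR} = M_H M_NZ λ ((s−3/2) a (ik_{(1,p-1)}) D_{a-1,b,c} + b D_{a,b-1,c})`
(the conventions for `a = 0` resp. `b = 0` are automatic since the corresponding
terms carry the factors `a` resp. `b`). -/
noncomputable def MNR (C₀ : ℝ) (s p : ℕ) (lam : ℝ) (a b c : ℕ)
    (k : Fin (p + 1) → ℤ) : ℂ :=
  MH C₀ p k * MNZ p k * (lam : ℂ) *
    (((s : ℂ) - 3/2) * (a : ℂ) * (Complex.I * (ksum1 p k : ℂ)) * Dabc p (a - 1) b c k
      + (b : ℂ) * Dabc p a (b - 1) c k)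

/-- `P_{N_j}(f) = (λ_j b_j/2π) ∫_𝕋 (∂_x³f)^{a_j}(∂_x²f)^{b_j-1}(∂_xf)^{c_j}f^{d_j} dx`. -/
noncomputable def PNj (lam : ℝ) (a b c d : ℕ) (f : ℝ → ℝ) : ℝ :=
  (lam * (b : ℝ) / (2 * Real.pi)) *
    ∫ x in (0:ℝ)..(2 * Real.pi),
      (iteratedDeriv 3 f x) ^ a * (iteratedDeriv 2 f x) ^ (b - 1) *
        (deriv f x) ^ c * (f x) ^ d

/-!
On `Z₀^(p)` the last frequency is determined by the others. The terms with `k₁ + ⋯ + k_{p-1} = 0`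
have `k_{p+1} = -k_p`, so their sum factorizes into the mean of a product of derivatives of `f`,
which is `P_N(f)` by Fourier inversion, and `‖∂_x^{s+1} g‖²`. Subtracting also the terms cut out by
`M_H M_NZ` leaves those with `K := max(|k₁|, …, |k_{p-1}|) ≥ 1` and one of `|k_p|`, `|k_{p+1}|`
below a multiple of `K^{5/4}`. As `|k_p + k_{p+1}| ≲ K`, both are `O(K^{5/4})`, whence
`|k_p k_{p+1}| ≲ K³`: one derivative on each `g` is traded for three derivatives on a single `f`.
What is left is bounded by the `ℓ¹` norms of the Fourier coefficients of the derivatives of `f`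
(Cauchy-Schwarz, one more derivative) and the `ℓ²` norm of those of `∂_x^s g`.
-/

section ProductSeries

variable {𝕜 ι : Type*} [NormedField 𝕜]

theorem summable_norm_fin_prod :
    ∀ {n : ℕ} {u : Fin n → ι → 𝕜}, (∀ i, Summable fun k => ‖u i k‖) →
      Summable fun k : Fin n → ι => ‖∏ i, u i (k i)‖
  | 0, _, _ => (hasSum_fintype _).summable
  | n + 1, u, hu => by
    rw [← (Fin.consEquiv fun _ => ι).summable_iff]
    refine ((hu 0).mul_norm (summable_norm_fin_prod fun i => hu i.succ)).congr fun q => ?_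
    simp [Fin.prod_univ_succ, Fin.consEquiv]

variable [CompleteSpace 𝕜]

theorem hasSum_fin_prod :
    ∀ {n : ℕ} {u : Fin n → ι → 𝕜}, (∀ i, Summable fun k => ‖u i k‖) →
      HasSum (fun k : Fin n → ι => ∏ i, u i (k i)) (∏ i, ∑' k, u i k)
  | 0, _, _ => by simp
  | n + 1, u, hu => by
    have htail := fun i : Fin n => hu i.succ
    have hprod := (hu 0).of_norm.hasSum.mul (hasSum_fin_prod htail)
      ((hu 0).mul_norm (summable_norm_fin_prod htail)).of_norm
    rw [← (Fin.consEquiv fun _ => ι).hasSum_iff, Fin.prod_univ_succ]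
    refine hprod.congr_fun fun q => ?_
    simp [Fin.prod_univ_succ, Fin.consEquiv]

theorem hasSum_sum_mul_fin_prod {a w : ι → 𝕜} (haw : Summable fun k => ‖a k * w k‖)
    (hw : Summable fun k => ‖w k‖) (n : ℕ) :
    HasSum (fun k : Fin (n + 1) → ι => (∑ m, a (k m)) * ∏ i, w (k i))
      ((n + 1) * ((∑' k, a k * w k) * (∑' k, w k) ^ n)) := by
  have hpivot : ∀ m : Fin (n + 1), HasSum (fun k : Fin (n + 1) → ι => a (k m) * ∏ i, w (k i))
      ((∑' k, a k * w k) * (∑' k, w k) ^ n) := fun m => by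
    have hprod := haw.of_norm.hasSum.mul (hasSum_fin_prod fun _ : Fin n => hw)
      (haw.mul_norm (summable_norm_fin_prod fun _ => hw)).of_norm
    rw [Fin.prod_const] at hprod
    rw [← (Fin.insertNthEquiv (fun _ => ι) m).hasSum_iff]
    refine hprod.congr_fun fun q => ?_
    simp [Fin.prod_univ_succAbove _ m, mul_assoc]
  simpa [Finset.sum_mul] using hasSum_sum fun m (_ : m ∈ Finset.univ) => hpivot m

end ProductSeries

section Fourier

open Complex (I)
open scoped Real

theorem fhat_eq_fourierCoeffOn (f : ℝ → ℂ) (k : ℤ) :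
    fhat f k = fourierCoeffOn Real.two_pi_pos f k := by
  have hpi : (π : ℂ) ≠ 0 := by exact_mod_cast Real.pi_ne_zero
  rw [fourierCoeffOn_eq_integral, fhat, sub_zero, one_div, Complex.real_smul, Complex.ofReal_inv]
  congr 1
  refine intervalIntegral.integral_congr fun x _ => ?_
  rw [fourier_coe_apply, smul_eq_mul, mul_comm]
  congr 2
  push_cast
  field_simp

theorem fhat_neg (g : ℝ → ℝ) (k : ℤ) : fhat (cF g) (-k) = (starRingEnd ℂ) (fhat (cF g) k) := by
  rw [fhat, fhat, map_mul, map_inv₀, Complex.conj_ofReal,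
    intervalIntegral.integral_of_le Real.two_pi_pos.le,
    intervalIntegral.integral_of_le Real.two_pi_pos.le, ← integral_conj]
  simp [cF, ← Complex.exp_conj]

theorem fhat_deriv {f : ℝ → ℂ} (hf : ContDiff ℝ 1 f) (hfp : Function.Periodic f (2 * π)) (k : ℤ) :
    fhat (deriv f) k = I * k * fhat f k := by
  have hdiff : Differentiable ℝ f := hf.differentiable one_ne_zero
  have hint : IntervalIntegrable (deriv f) MeasureTheory.volume 0 (2 * π) :=
    (hf.continuous_deriv le_rfl).intervalIntegrable _ _
  have hend : f (2 * π) = f 0 := by simpa using hfp 0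
  rcases eq_or_ne k 0 with rfl | hk
  · simp [fhat, intervalIntegral.integral_deriv_eq_sub (fun x _ => hdiff x) hint, hend]
  · have hk' : (k : ℂ) ≠ 0 := by exact_mod_cast hk
    have hpi : (π : ℂ) ≠ 0 := by exact_mod_cast Real.pi_ne_zero
    rw [fhat_eq_fourierCoeffOn f, fourierCoeffOn_of_hasDerivAt _ hk
      (fun x _ => (hdiff x).hasDerivAt) hint, hend, ← fhat_eq_fourierCoeffOn]
    push_cast
    field_simp
    ring

theorem periodic_deriv {f : ℝ → ℂ} {T : ℝ} (hf : Function.Periodic f T) :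
    Function.Periodic (deriv f) T := fun x => by
  rw [← deriv_comp_add_const, funext hf]

theorem periodic_iteratedDeriv {f : ℝ → ℂ} {T : ℝ} (hf : Function.Periodic f T) (m : ℕ) :
    Function.Periodic (iteratedDeriv m f) T := by
  induction m with
  | zero => simpa using hf
  | succ m ih => simpa only [iteratedDeriv_succ] using periodic_deriv ih

theorem fhat_iteratedDeriv {m : ℕ} {f : ℝ → ℂ} (hf : ContDiff ℝ m f)
    (hfp : Function.Periodic f (2 * π)) (k : ℤ) :
    fhat (iteratedDeriv m f) k = (I * k) ^ m * fhat f k := by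
  induction m with
  | zero => simp
  | succ m ih =>
    have hderiv : ContDiff ℝ 1 (iteratedDeriv m f) :=
      (contDiff_nat_succ_iff_contDiff_one_iteratedDeriv.1 hf).2
    rw [iteratedDeriv_succ, fhat_deriv hderiv (periodic_iteratedDeriv hfp m),
      ih (hf.of_le (by exact_mod_cast m.le_succ)), pow_succ']
    ring

theorem contDiff_cF {m : WithTop ℕ∞} {f : ℝ → ℝ} (hf : ContDiff ℝ m f) : ContDiff ℝ m (cF f) :=
  Complex.ofRealCLM.contDiff.comp hf

theorem periodic_cF {f : ℝ → ℝ} {T : ℝ} (hf : Function.Periodic f T) :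
    Function.Periodic (cF f) T := fun x => by
  simp only [cF, hf x]

theorem iteratedDeriv_cF {m : ℕ} {f : ℝ → ℝ} (hf : ContDiff ℝ m f) :
    iteratedDeriv m (cF f) = cF (iteratedDeriv m f) := by
  induction m with
  | zero => simp
  | succ m ih =>
    rw [iteratedDeriv_succ, iteratedDeriv_succ, ih (hf.of_le (by exact_mod_cast m.le_succ))]
    exact funext fun x => ((hf.differentiable_iteratedDeriv m
      (by exact_mod_cast m.lt_succ_self)) x).hasDerivAt.ofReal_comp.deriv

theorem hasSum_fhat_mul_exp {f : ℝ → ℂ} (hf : Continuous f) (hfp : Function.Periodic f (2 * π))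
    (hsum : Summable (fhat f)) (x : ℝ) :
    HasSum (fun k : ℤ => fhat f k * Complex.exp (I * k * x)) (f x) := by
  have : Fact (0 < 2 * π) := ⟨Real.two_pi_pos⟩
  have hpi : (π : ℂ) ≠ 0 := by exact_mod_cast Real.pi_ne_zero
  let F : C(AddCircle (2 * π), ℂ) := ⟨hfp.lift, continuous_coinduced_dom.mpr hf⟩
  have hcoeff : fourierCoeff F = fhat f := funext fun k => by
    rw [fourierCoeff_eq_intervalIntegral F k 0, fhat, zero_add, Complex.real_smul, one_div,
      Complex.ofReal_inv]
    congr 1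
    refine intervalIntegral.integral_congr fun y _ => ?_
    change fourier (-k) (y : AddCircle (2 * π)) • f y = _
    rw [fourier_coe_apply, smul_eq_mul, mul_comm]
    congr 2
    push_cast
    field_simp
  have hF := has_pointwise_sum_fourier_series_of_summable (f := F) (hcoeff ▸ hsum) x
  change HasSum _ (F x)
  convert hF using 2 with k
  rw [hcoeff, smul_eq_mul, fourier_coe_apply]
  congr 2
  push_cast
  field_simp

theorem norm_exp_I_mul_int_mul (k : ℤ) (x : ℝ) : ‖Complex.exp (I * k * x)‖ = 1 := by
  rw [show I * (k : ℂ) * x = ((k * x : ℝ) : ℂ) * I by push_cast; ring,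
    Complex.norm_exp_ofReal_mul_I]

theorem integral_exp_I_mul_int_mul (m : ℤ) :
    ∫ x in (0 : ℝ)..(2 * π), Complex.exp (I * m * x) = if m = 0 then ((2 * π : ℝ) : ℂ) else 0 := by
  split_ifs with h
  · simp [h]
  · have hexp : Complex.exp (I * m * ((2 * π : ℝ) : ℂ)) = 1 :=
      Complex.exp_eq_one_iff.2 ⟨m, by push_cast; ring⟩
    rw [integral_exp_mul_complex (by simpa using h), hexp]
    simp

theorem mean_prod_eq_tsum_fhat {n : ℕ} {F : Fin n → ℝ → ℂ} (hF : ∀ i, Continuous (F i))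
    (hFp : ∀ i, Function.Periodic (F i) (2 * π)) (hsum : ∀ i, Summable fun k => ‖fhat (F i) k‖) :
    ((2 * π : ℝ) : ℂ)⁻¹ * ∫ x in (0 : ℝ)..(2 * π), ∏ i, F i x =
      ∑' k : Fin n → ℤ, if ∑ i, k i = 0 then ∏ i, fhat (F i) (k i) else 0 := by
  have hmode : ∀ (k : Fin n → ℤ) (x : ℝ), ∏ i, (fhat (F i) (k i) * Complex.exp (I * k i * x)) =
      (∏ i, fhat (F i) (k i)) * Complex.exp (I * ((∑ i, k i : ℤ) : ℂ) * x) := fun k x => by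
    rw [Finset.prod_mul_distrib, ← Complex.exp_sum, ← Finset.sum_mul, ← Finset.mul_sum]
    push_cast
    rfl
  have hpoint : ∀ x : ℝ, HasSum (fun k : Fin n → ℤ =>
      (∏ i, fhat (F i) (k i)) * Complex.exp (I * ((∑ i, k i : ℤ) : ℂ) * x)) (∏ i, F i x) :=
    fun x => by
      have hprod := hasSum_fin_prod (u := fun i (k : ℤ) => fhat (F i) k * Complex.exp (I * k * x))
        fun i => by simpa [norm_exp_I_mul_int_mul] using hsum i
      simpa only [(hasSum_fhat_mul_exp (hF _) (hFp _) (hsum _).of_norm x).tsum_eq, hmode]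
        using hprod
  have hint := intervalIntegral.hasSum_integral_of_dominated_convergence
    (μ := MeasureTheory.volume) (a := 0) (b := 2 * π)
    (fun (k : Fin n → ℤ) _ => ‖∏ i, fhat (F i) (k i)‖)
    (fun k => Continuous.aestronglyMeasurable (by fun_prop))
    (fun k => .of_forall fun x _ => by rw [norm_mul, norm_exp_I_mul_int_mul, mul_one])
    (.of_forall fun x _ => summable_norm_fin_prod hsum) intervalIntegrable_const
    (.of_forall fun x _ => hpoint x)
  have hpi : ((2 * π : ℝ) : ℂ) ≠ 0 := by exact_mod_cast Real.two_pi_pos.ne'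
  rw [← hint.tsum_eq, ← tsum_mul_left]
  refine tsum_congr fun k => ?_
  rw [intervalIntegral.integral_const_mul, integral_exp_I_mul_int_mul]
  split_ifs <;> field_simp
  simp

end Fourier

section Sobolev

open Complex (I)
open MeasureTheory (volume MemLp)
open scoped Real

/-- The Japanese bracket `⟨k⟩ = (1 + k²)^{1/2}`. -/
noncomputable def jap (k : ℤ) : ℝ := √(1 + (k : ℝ) ^ 2)

theorem jap_sq (k : ℤ) : jap k ^ 2 = 1 + (k : ℝ) ^ 2 := Real.sq_sqrt (by positivity)

theorem one_le_jap (k : ℤ) : 1 ≤ jap k := Real.one_le_sqrt.2 (by linarith [sq_nonneg (k : ℝ)])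

theorem jap_nonneg (k : ℤ) : 0 ≤ jap k := Real.sqrt_nonneg _

theorem abs_le_jap (k : ℤ) : |(k : ℝ)| ≤ jap k := Real.abs_le_sqrt (by linarith)

theorem summable_inv_jap_sq : Summable fun k : ℤ => (jap k ^ 2)⁻¹ := by
  have hsq : Summable fun k : ℤ => ((k : ℝ) ^ 2)⁻¹ := by
    simpa using (Real.summable_one_div_int_pow (p := 2)).2 one_lt_two
  refine hsq.of_norm_bounded_eventually ?_
  filter_upwards [(Set.finite_singleton (0 : ℤ)).compl_mem_cofinite] with k hk
  have hk' : (k : ℝ) ≠ 0 := by exact_mod_cast hk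
  rw [jap_sq, Real.norm_of_nonneg (by positivity)]
  exact inv_anti₀ (by positivity) (by linarith)

theorem hsNormC_nonneg (m : ℕ) (f : ℝ → ℂ) : 0 ≤ hsNormC m f := Real.sqrt_nonneg _

theorem hsNormC_sq (m : ℕ) (f : ℝ → ℂ) :
    hsNormC m f ^ 2 = ∑' k : ℤ, (1 + (k : ℝ) ^ 2) ^ m * ‖fhat f k‖ ^ 2 :=
  Real.sq_sqrt (tsum_nonneg fun k => by positivity)

/-- Membership in the Sobolev space `H^m(𝕋)`. Integrability is part of the definition, since the
Fourier coefficients of a non-integrable function are junk values. -/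
structure MemHs (m : ℕ) (f : ℝ → ℂ) : Prop where
  intervalIntegrable : IntervalIntegrable f volume 0 (2 * π)
  summable : Summable fun k : ℤ => (1 + (k : ℝ) ^ 2) ^ m * ‖fhat f k‖ ^ 2

theorem MemHs.mono {m r : ℕ} {f : ℝ → ℂ} (hf : MemHs r f) (hmr : m ≤ r) : MemHs m f where
  intervalIntegrable := hf.intervalIntegrable
  summable := hf.summable.of_nonneg_of_le (fun k => by positivity) fun k => by
    gcongr
    linarith [sq_nonneg (k : ℝ)]

theorem summable_sq_norm_fhat {f : ℝ → ℂ} (hf : MemLp f 2 (volume.restrict (Set.Ioc 0 (2 * π)))) :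
    Summable fun k => ‖fhat f k‖ ^ 2 := by
  simpa only [fhat_eq_fourierCoeffOn] using (hasSum_sq_fourierCoeffOn Real.two_pi_pos hf).summable

theorem memHs_of_contDiff {m : ℕ} {f : ℝ → ℂ} (hf : ContDiff ℝ m f)
    (hfp : Function.Periodic f (2 * π)) : MemHs m f where
  intervalIntegrable := hf.continuous.intervalIntegrable _ _
  summable := by
    have hL2 : ∀ {u : ℝ → ℂ}, Continuous u → Summable fun k => ‖fhat u k‖ ^ 2 := fun hu =>
      summable_sq_norm_fhat <| (MeasureTheory.memLp_two_iff_integrable_sq_norm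
        hu.aestronglyMeasurable).2 (hu.norm.pow 2).integrableOn_Ioc
    refine (((hL2 hf.continuous).add (hL2 (hf.continuous_iteratedDeriv m le_rfl))).mul_left
      (2 ^ (m - 1))).of_nonneg_of_le (fun k => by positivity) fun k => ?_
    rw [fhat_iteratedDeriv hf hfp]
    calc (1 + (k : ℝ) ^ 2) ^ m * ‖fhat f k‖ ^ 2
        ≤ 2 ^ (m - 1) * (1 ^ m + ((k : ℝ) ^ 2) ^ m) * ‖fhat f k‖ ^ 2 := by
          gcongr
          exact add_pow_le zero_le_one (sq_nonneg _) m
      _ = 2 ^ (m - 1) * (‖fhat f k‖ ^ 2 + ‖(I * k) ^ m * fhat f k‖ ^ 2) := by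
          rw [norm_mul, norm_pow, norm_mul, Complex.norm_I, Complex.norm_intCast, one_mul, mul_pow,
            pow_right_comm |(k : ℝ)|, sq_abs]
          ring

namespace MemHs

variable {m : ℕ} {f : ℝ → ℂ}

theorem summable_and_tsum_jap_pow_mul_norm_fhat_le (hf : MemHs (m + 1) f) :
    (Summable fun k => jap k ^ m * ‖fhat f k‖) ∧
      ∑' k, jap k ^ m * ‖fhat f k‖ ≤ √(∑' k, (jap k ^ 2)⁻¹) * hsNormC (m + 1) f := by
  have hinv : ∀ k, (jap k)⁻¹ ^ (2 : ℝ) = (jap k ^ 2)⁻¹ := fun k => by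
    rw [Real.rpow_two, inv_pow]
  have hweight : ∀ k : ℤ, (jap k ^ (m + 1) * ‖fhat f k‖) ^ (2 : ℝ) =
      (1 + (k : ℝ) ^ 2) ^ (m + 1) * ‖fhat f k‖ ^ 2 := fun k => by
    rw [Real.rpow_two, mul_pow, ← jap_sq, pow_right_comm]
  have hsplit : ∀ k, (jap k)⁻¹ * (jap k ^ (m + 1) * ‖fhat f k‖) = jap k ^ m * ‖fhat f k‖ :=
    fun k => by
      have := (one_pos.trans_le (one_le_jap k)).ne'
      field_simp
      ring
  have hCS := Real.summable_and_inner_le_Lp_mul_Lq_tsum_of_nonneg Real.HolderConjugate.two_two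
    (f := fun k => (jap k)⁻¹) (g := fun k => jap k ^ (m + 1) * ‖fhat f k‖)
    (fun k => inv_nonneg.2 (jap_nonneg k))
    (fun k => mul_nonneg (pow_nonneg (jap_nonneg k) _) (norm_nonneg _))
    (by simpa only [hinv] using summable_inv_jap_sq) (by simpa only [hweight] using hf.summable)
  simpa only [hinv, hweight, hsplit, hsNormC, ← Real.sqrt_eq_rpow] using hCS

theorem summable_jap_pow_mul_norm_fhat (hf : MemHs (m + 1) f) :
    Summable fun k => jap k ^ m * ‖fhat f k‖ :=
  hf.summable_and_tsum_jap_pow_mul_norm_fhat_le.1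

theorem tsum_jap_pow_mul_norm_fhat_le (hf : MemHs (m + 1) f) :
    ∑' k, jap k ^ m * ‖fhat f k‖ ≤ √(∑' k, (jap k ^ 2)⁻¹) * hsNormC (m + 1) f :=
  hf.summable_and_tsum_jap_pow_mul_norm_fhat_le.2

end MemHs

/-- The Fourier coefficients `(ik)^m f̂(k)` of `∂_x^m f`, meaningful without differentiability. -/
noncomputable def derivCoeff (m : ℕ) (f : ℝ → ℂ) (k : ℤ) : ℂ := (I * k) ^ m * fhat f k

theorem norm_derivCoeff (m : ℕ) (f : ℝ → ℂ) (k : ℤ) :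
    ‖derivCoeff m f k‖ = |(k : ℝ)| ^ m * ‖fhat f k‖ := by
  simp [derivCoeff]

theorem norm_derivCoeff_le {m r : ℕ} (hmr : m ≤ r) (f : ℝ → ℂ) (k : ℤ) :
    ‖derivCoeff m f k‖ ≤ jap k ^ r * ‖fhat f k‖ := by
  rw [norm_derivCoeff]
  gcongr
  calc |(k : ℝ)| ^ m ≤ jap k ^ m := by gcongr; exact abs_le_jap k
    _ ≤ jap k ^ r := pow_le_pow_right₀ (one_le_jap k) hmr

theorem norm_derivCoeff_sq_le (m : ℕ) (f : ℝ → ℂ) (k : ℤ) :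
    ‖derivCoeff m f k‖ ^ 2 ≤ (1 + (k : ℝ) ^ 2) ^ m * ‖fhat f k‖ ^ 2 := by
  rw [← jap_sq, pow_right_comm, ← mul_pow]
  gcongr
  exact norm_derivCoeff_le le_rfl f k

theorem MemHs.summable_norm_derivCoeff {m r : ℕ} {f : ℝ → ℂ} (hf : MemHs (r + 1) f)
    (hmr : m ≤ r) : Summable fun k => ‖derivCoeff m f k‖ :=
  hf.summable_jap_pow_mul_norm_fhat.of_nonneg_of_le (fun _ => norm_nonneg _)
    (norm_derivCoeff_le hmr f)

theorem MemHs.summable_sq_norm_derivCoeff {m : ℕ} {f : ℝ → ℂ} (hf : MemHs m f) :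
    Summable fun k => ‖derivCoeff m f k‖ ^ 2 :=
  hf.summable.of_nonneg_of_le (fun _ => by positivity) (norm_derivCoeff_sq_le m f)

theorem tsum_sq_norm_derivCoeff_le {m : ℕ} {f : ℝ → ℂ} (hf : MemHs m f) :
    ∑' k, ‖derivCoeff m f k‖ ^ 2 ≤ hsNormC m f ^ 2 := by
  rw [hsNormC_sq]
  exact hf.summable_sq_norm_derivCoeff.tsum_le_tsum (norm_derivCoeff_sq_le m f) hf.summable

theorem derivCoeff_mul_derivCoeff_neg (m : ℕ) (g : ℝ → ℝ) (k : ℤ) :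
    derivCoeff m (cF g) k * derivCoeff m (cF g) (-k) =
      (((k : ℝ) ^ (2 * m) * ‖fhat (cF g) k‖ ^ 2 : ℝ) : ℂ) := by
  have hsymbol : (I * k) ^ m * (I * ((-k : ℤ) : ℂ)) ^ m = (k : ℂ) ^ (2 * m) := by
    rw [← mul_pow, pow_mul]
    congr 1
    push_cast
    linear_combination -(k : ℂ) ^ 2 * Complex.I_sq
  rw [derivCoeff, derivCoeff, fhat_neg, mul_mul_mul_comm, hsymbol, Complex.mul_conj']
  push_cast
  rfl

theorem tsum_derivCoeff_mul_derivCoeff_neg (m : ℕ) (g : ℝ → ℝ) :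
    ∑' k, derivCoeff m (cF g) k * derivCoeff m (cF g) (-k) = (dxNormSq m (cF g) : ℂ) := by
  rw [dxNormSq, Complex.ofReal_tsum]
  exact tsum_congr (derivCoeff_mul_derivCoeff_neg m g)

end Sobolev

section ZeroSum

/-- The last frequency of the point of `Z₀^(n+1)` whose other frequencies are `q`. -/
def lastFreq {n : ℕ} (q : (Fin n → ℤ) × ℤ) : ℤ := -(∑ i, q.1 i) - q.2

/-- Coordinates on `Z₀^(n+1)`: all frequencies but the last, which they determine. The `n`
frequencies of the low factors are kept apart from the penultimate one. -/
def zeroSumEquiv (n : ℕ) :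
    (Fin n → ℤ) × ℤ ≃ {k : Fin (n + 1 + 1) → ℤ // (∑ i, k i) = 0} where
  toFun q := ⟨Fin.snoc (α := fun _ => ℤ) (Fin.snoc (α := fun _ => ℤ) q.1 q.2) (lastFreq q), by
    simp [Fin.sum_univ_castSucc, lastFreq]⟩
  invFun k := (fun i => k.1 i.castSucc.castSucc, k.1 (Fin.last n).castSucc)
  left_inv q := by simp
  right_inv k := by
    have hsum := k.2
    rw [Fin.sum_univ_castSucc, Fin.sum_univ_castSucc] at hsum
    ext i
    refine Fin.lastCases ?_ (fun i => ?_) i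
    · simp only [Fin.snoc_last, lastFreq]
      linarith
    · refine Fin.lastCases ?_ (fun i => ?_) i <;> simp

/-- The exchange of the last two frequencies of a point of `Z₀^(n+1)`. -/
def swapEquiv (n : ℕ) : (Fin n → ℤ) × ℤ ≃ (Fin n → ℤ) × ℤ :=
  Function.Involutive.toPerm (fun q => (q.1, lastFreq q)) fun q => by simp [lastFreq]

/-- The region where the cut-off `M_H` equals `1`, in the coordinates of `zeroSumEquiv`; the
maximum of the low frequencies is their sup norm. -/
def IsHigh {n : ℕ} (C₀ : ℝ) (q : (Fin n → ℤ) × ℤ) : Prop :=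
  C₀ * ‖q.1‖ ≤ min (|(q.2 : ℝ)| ^ ((4 : ℝ) / 5)) (|(lastFreq q : ℝ)| ^ ((4 : ℝ) / 5))

variable {n : ℕ} (q : (Fin n → ℤ) × ℤ)

@[simp]
theorem zeroSumEquiv_castSucc (i : Fin n) : (zeroSumEquiv n q).1 i.castSucc.castSucc = q.1 i := by
  simp [zeroSumEquiv]

@[simp]
theorem zeroSumEquiv_penultimate : (zeroSumEquiv n q).1 (Fin.last n).castSucc = q.2 := by
  simp [zeroSumEquiv]

@[simp]
theorem zeroSumEquiv_last : (zeroSumEquiv n q).1 (Fin.last (n + 1)) = lastFreq q := by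
  simp [zeroSumEquiv]

theorem ksum1_zeroSumEquiv : ksum1 (n + 1) (zeroSumEquiv n q).1 = ∑ i, q.1 i := by
  simp [ksum1, Finset.sum_filter, Fin.sum_univ_castSucc]

theorem MNZ_zeroSumEquiv :
    MNZ (n + 1) (zeroSumEquiv n q).1 = if ∑ i, q.1 i ≠ 0 then 1 else 0 := by
  rw [MNZ, ksum1_zeroSumEquiv]

theorem fmax_le {α : Type*} {t : Finset α} {u : α → ℝ} {B : ℝ} (hB : 0 ≤ B)
    (hu : ∀ i ∈ t, u i ≤ B) : fmax t u ≤ B := by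
  lift B to ℝ≥0 using hB
  exact NNReal.coe_le_coe.2 (Finset.sup_le fun i hi => Real.toNNReal_le_iff_le_coe.2 (hu i hi))

theorem le_fmax {α : Type*} {t : Finset α} (u : α → ℝ) {i : α} (hi : i ∈ t) : u i ≤ fmax t u :=
  Real.toNNReal_le_iff_le_coe.1 (Finset.le_sup (f := fun i => Real.toNNReal (u i)) hi)

theorem fmax_abs_zeroSumEquiv :
    fmax (Finset.univ.filter fun i : Fin (n + 1 + 1) => (i : ℕ) < n + 1 - 1)
      (fun i => |((zeroSumEquiv n q).1 i : ℝ)|) = ‖q.1‖ := by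
  refine le_antisymm (fmax_le (norm_nonneg _) fun i hi => ?_)
    ((pi_norm_le_iff_of_nonneg NNReal.zero_le_coe).2 fun i => ?_)
  · have hin : (i : ℕ) < n := by simpa using hi
    have hi' : i = (⟨i, hin⟩ : Fin n).castSucc.castSucc := rfl
    rw [hi', zeroSumEquiv_castSucc, ← Int.norm_eq_abs]
    exact norm_le_pi_norm q.1 _
  · rw [Int.norm_eq_abs, ← zeroSumEquiv_castSucc]
    exact le_fmax (fun i => |((zeroSumEquiv n q).1 i : ℝ)|) (by simp)

theorem MH_zeroSumEquiv (C₀ : ℝ) :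
    MH C₀ (n + 1) (zeroSumEquiv n q).1 = if IsHigh C₀ q then 1 else 0 := by
  have hpen : (zeroSumEquiv n q).1 ⟨n + 1 - 1, by omega⟩ = q.2 := zeroSumEquiv_penultimate q
  rw [MH, fmax_abs_zeroSumEquiv, hpen, zeroSumEquiv_last, IsHigh]

theorem Gam_eq_tsum (M : (Fin (n + 1 + 1) → ℤ) → ℂ) (f g : ℝ → ℂ) :
    Gam (n + 1) M (tup (n + 1) f g) = ∑' q : (Fin n → ℤ) × ℤ, M (zeroSumEquiv n q).1 *
      ((∏ i, fhat f (q.1 i)) * (fhat g q.2 * fhat g (lastFreq q))) := by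
  rw [Gam, ← (zeroSumEquiv n).tsum_eq]
  refine tsum_congr fun q => ?_
  simp [Fin.prod_univ_castSucc, tup, mul_assoc]

end ZeroSum

section FrequencyLoss

theorem le_rpow_mul_rpow_of_rpow_lt {C K t : ℝ} (hC : 0 ≤ C) (hK : 0 ≤ K) (ht : 0 ≤ t)
    (h : t ^ ((4 : ℝ) / 5) < C * K) : t ≤ C ^ ((5 : ℝ) / 4) * K ^ ((5 : ℝ) / 4) := by
  rw [← Real.mul_rpow hC hK, ← inv_div]
  exact (Real.le_rpow_inv_iff_of_pos ht (mul_nonneg hC hK) (by norm_num)).2 h.le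

/-- As one of `x`, `y` is `O(K^{5/4})` and `x + y = O(K)`, both are `O(K^{5/4})`; the power `3` is
`5/4 + 5/4` rounded up. -/
theorem abs_mul_abs_le_of_min_rpow_lt {C K N x y : ℝ} (hK : 1 ≤ K) (hN : 0 ≤ N)
    (hxy : |x + y| ≤ N * K)
    (hlow : min (|x| ^ ((4 : ℝ) / 5)) (|y| ^ ((4 : ℝ) / 5)) < C * K) :
    |x| * |y| ≤ (N + C ^ ((5 : ℝ) / 4)) ^ 2 * K ^ 3 := by
  wlog hx : |x| ^ ((4 : ℝ) / 5) < C * K generalizing x y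
  · rw [mul_comm]
    exact this (by rwa [add_comm]) (by rwa [min_comm]) ((min_lt_iff.1 hlow).resolve_left hx)
  have hK0 : 0 ≤ K := zero_le_one.trans hK
  have hC : 0 ≤ C := (pos_of_mul_pos_left
    ((Real.rpow_nonneg (abs_nonneg x) _).trans_lt hx) hK0).le
  set c := C ^ ((5 : ℝ) / 4)
  set X := K ^ ((5 : ℝ) / 4)
  have : 0 ≤ c := Real.rpow_nonneg hC _
  have : 0 ≤ X := Real.rpow_nonneg hK0 _
  have hKX : K ≤ X := Real.self_le_rpow_of_one_le hK (by norm_num)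
  have hXK : X ^ 2 ≤ K ^ 3 := by
    rw [← Real.rpow_mul_natCast hK0, ← Real.rpow_natCast K 3]
    exact Real.rpow_le_rpow_of_exponent_le hK (by norm_num)
  have hxX : |x| ≤ c * X := le_rpow_mul_rpow_of_rpow_lt hC hK0 (abs_nonneg x) hx
  have hyX : |y| ≤ (N + c) * X := calc
    |y| = |x + y - x| := by rw [add_sub_cancel_left]
    _ ≤ |x + y| + |x| := abs_sub _ _
    _ ≤ N * X + c * X := add_le_add (hxy.trans (by gcongr)) hxX
    _ = (N + c) * X := by ring
  calc |x| * |y| ≤ ((N + c) * X) * ((N + c) * X) := by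
        gcongr
        exact hxX.trans (by gcongr; exact le_add_of_nonneg_left hN)
    _ = (N + c) ^ 2 * X ^ 2 := by ring
    _ ≤ (N + c) ^ 2 * K ^ 3 := by gcongr

theorem one_le_norm_of_sum_ne_zero {n : ℕ} {k : Fin n → ℤ} (hk : ∑ i, k i ≠ 0) : 1 ≤ ‖k‖ := by
  obtain ⟨i, -, hi⟩ := Finset.exists_ne_zero_of_sum_ne_zero hk
  calc (1 : ℝ) ≤ ‖k i‖ := by
        rw [Int.norm_eq_abs]
        exact_mod_cast Int.one_le_abs hi
    _ ≤ ‖k‖ := norm_le_pi_norm k i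

theorem abs_mul_abs_lastFreq_le {n : ℕ} {C₀ : ℝ} {q : (Fin n → ℤ) × ℤ}
    (hq : ∑ i, q.1 i ≠ 0) (hlow : ¬IsHigh C₀ q) :
    |(q.2 : ℝ)| * |(lastFreq q : ℝ)| ≤ (n + C₀ ^ ((5 : ℝ) / 4)) ^ 2 * ‖q.1‖ ^ 3 := by
  refine abs_mul_abs_le_of_min_rpow_lt (one_le_norm_of_sum_ne_zero hq) n.cast_nonneg ?_
    (not_le.1 hlow)
  have hsum : (q.2 : ℝ) + lastFreq q = -((∑ i, q.1 i : ℤ) : ℝ) := by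
    rw [lastFreq]
    push_cast
    ring
  rw [hsum, abs_neg, ← Int.norm_eq_abs]
  calc ‖∑ i, q.1 i‖ ≤ ∑ i, ‖q.1 i‖ := norm_sum_le _ _
    _ ≤ n * ‖q.1‖ := by simpa using Pi.sum_norm_apply_le_norm q.1

theorem norm_pow_le_sum_jap_pow {n : ℕ} (k : Fin (n + 1) → ℤ) (r : ℕ) :
    ‖k‖ ^ r ≤ ∑ m, jap (k m) ^ r := by
  obtain ⟨m, hm⟩ := Finite.exists_max fun i => ‖k i‖
  have hk : ‖k‖ ≤ jap (k m) := (pi_norm_le_iff_of_nonneg (jap_nonneg _)).2 fun i =>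
    (hm i).trans (by rw [Int.norm_eq_abs]; exact abs_le_jap _)
  calc ‖k‖ ^ r ≤ jap (k m) ^ r := by gcongr
    _ ≤ ∑ m, jap (k m) ^ r := Finset.single_le_sum (f := fun m => jap (k m) ^ r)
      (fun i _ => pow_nonneg (jap_nonneg _) r) (Finset.mem_univ m)

end FrequencyLoss

section Terms

variable {n : ℕ}

/-- The summand `∏ U_i(k_i) · V(k_{n+1}) V(k_{n+2})` of a form on `Z₀^(n+1)` whose multiplier is a
product, in the coordinates of `zeroSumEquiv`. -/
noncomputable def gamTerm (U : Fin n → ℤ → ℂ) (V : ℤ → ℂ) (q : (Fin n → ℤ) × ℤ) : ℂ :=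
  (∏ i, U i (q.1 i)) * (V q.2 * V (lastFreq q))

theorem hasSum_mul_average {Q : (Fin n → ℤ) → ℝ} {G : ℤ → ℝ} (hQ : ∀ k, 0 ≤ Q k)
    (hG : ∀ l, 0 ≤ G l) {A B : ℝ} (hQA : HasSum Q A) (hGB : HasSum G B) :
    HasSum (fun q : (Fin n → ℤ) × ℤ => Q q.1 * ((G q.2 + G (lastFreq q)) / 2)) (A * B) := by
  have hpen : HasSum (fun q : (Fin n → ℤ) × ℤ => Q q.1 * G q.2) (A * B) :=
    hQA.mul hGB (hQA.summable.mul_of_nonneg hGB.summable hQ hG)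
  have hlast : HasSum (fun q : (Fin n → ℤ) × ℤ => Q q.1 * G (lastFreq q)) (A * B) :=
    (swapEquiv n).hasSum_iff.2 hpen
  have havg := (hpen.add hlast).div_const 2
  rw [add_self_div_two] at havg
  exact havg.congr_fun fun q => by ring

theorem mul_le_average_sq (x y : ℝ) : x * y ≤ (x ^ 2 + y ^ 2) / 2 := by
  linarith [two_mul_le_add_sq x y]

variable {U : Fin n → ℤ → ℂ} {V : ℤ → ℂ}

theorem summable_norm_gamTerm (hU : ∀ i, Summable fun k => ‖U i k‖)
    (hV : Summable fun l => ‖V l‖ ^ 2) : Summable fun q => ‖gamTerm U V q‖ := by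
  refine (hasSum_mul_average (fun _ => norm_nonneg _) (fun _ => sq_nonneg _)
    (summable_norm_fin_prod hU).hasSum hV.hasSum).summable.of_nonneg_of_le
    (fun _ => norm_nonneg _) fun q => ?_
  rw [gamTerm, norm_mul, norm_mul]
  gcongr
  exact mul_le_average_sq _ _

theorem tsum_resonant_gamTerm (hU : ∀ i, Summable fun k => ‖U i k‖)
    (hV : Summable fun l => ‖V l‖ ^ 2) :
    ∑' q, (if ∑ i, q.1 i = 0 then gamTerm U V q else 0) =
      (∑' k : Fin n → ℤ, if ∑ i, k i = 0 then ∏ i, U i (k i) else 0) * ∑' l, V l * V (-l) := by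
  have hlow : Summable fun k : Fin n → ℤ => ‖if ∑ i, k i = 0 then ∏ i, U i (k i) else 0‖ := by
    refine (summable_norm_fin_prod hU).of_nonneg_of_le (fun _ => norm_nonneg _) fun k => ?_
    split_ifs
    · exact le_rfl
    · exact norm_zero.trans_le (norm_nonneg _)
  have hpair : Summable fun l => ‖V l * V (-l)‖ := by
    have hneg : Summable fun l => ‖V (-l)‖ ^ 2 := (Equiv.neg ℤ).summable_iff.2 hV
    refine ((hV.add hneg).div_const 2).of_nonneg_of_le (fun _ => norm_nonneg _) fun l => ?_
    rw [norm_mul]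
    exact mul_le_average_sq _ _
  rw [tsum_mul_tsum_of_summable_norm hlow hpair]
  refine tsum_congr fun q => ?_
  split_ifs with hq
  · simp [gamTerm, lastFreq, hq]
  · simp

theorem tsum_sub_tsum_sub_tsum_eq_tsum_compl {β : Type*} {t : β → ℂ} (ht : Summable t)
    (R H : β → Prop) [DecidablePred R] [DecidablePred H] :
    ∑' q, t q - ∑' q, (if R q then t q else 0) -
        ∑' q, t q * ((if H q then 1 else 0) * if ¬R q then 1 else 0) =
      ∑' q, if ¬R q ∧ ¬H q then t q else 0 := by
  have hrestrict : ∀ (P : β → Prop) [DecidablePred P], Summable fun q => if P q then t q else 0 :=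
    fun P _ => (ht.indicator {q | P q}).congr fun q => by simp [Set.indicator_apply]
  have hhigh : ∀ q, t q * ((if H q then 1 else 0) * if ¬R q then 1 else 0) =
      if H q ∧ ¬R q then t q else 0 := fun q => by
    by_cases hH : H q <;> by_cases hR : R q <;> simp [hH, hR]
  simp only [hhigh]
  rw [← ht.tsum_sub (hrestrict R), ← (ht.sub (hrestrict R)).tsum_sub
    (hrestrict fun q => H q ∧ ¬R q)]
  refine tsum_congr fun q => ?_
  by_cases hH : H q <;> by_cases hR : R q <;> simp [hH, hR]

end Terms

section Remainder

variable {n r : ℕ} {e : Fin (n + 1) → ℕ} {f g : ℝ → ℂ} {C₀ : ℝ} (s : ℕ)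

theorem norm_prod_derivCoeff_le (he : ∀ i, e i ≤ r) (f : ℝ → ℂ) (k : Fin (n + 1) → ℤ) :
    ‖∏ i, derivCoeff (e i) f (k i)‖ ≤ ∏ i, (jap (k i) ^ r * ‖fhat f (k i)‖) := by
  rw [norm_prod]
  exact Finset.prod_le_prod (fun _ _ => norm_nonneg _) fun i _ => norm_derivCoeff_le (he i) f _

theorem norm_gamTerm_le (he : ∀ i, e i ≤ r) (f g : ℝ → ℂ)
    {q : (Fin (n + 1) → ℤ) × ℤ} (hq : ∑ i, q.1 i ≠ 0) (hlow : ¬IsHigh C₀ q) :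
    ‖gamTerm (fun i => derivCoeff (e i) f) (derivCoeff (s + 1) g) q‖ ≤
      (n + 1 + C₀ ^ ((5 : ℝ) / 4)) ^ 2 *
        (((∑ m, jap (q.1 m) ^ 3) * ∏ i, (jap (q.1 i) ^ r * ‖fhat f (q.1 i)‖)) *
          ((‖derivCoeff s g q.2‖ ^ 2 + ‖derivCoeff s g (lastFreq q)‖ ^ 2) / 2)) := by
  have hpeel : ∀ l : ℤ, ‖derivCoeff (s + 1) g l‖ = |(l : ℝ)| * ‖derivCoeff s g l‖ := fun l => by
    rw [norm_derivCoeff, norm_derivCoeff, pow_succ', mul_assoc]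
  have hloss : |(q.2 : ℝ)| * |(lastFreq q : ℝ)| ≤
      (n + 1 + C₀ ^ ((5 : ℝ) / 4)) ^ 2 * ∑ m, jap (q.1 m) ^ 3 := by
    refine (abs_mul_abs_lastFreq_le hq hlow).trans ?_
    rw [Nat.cast_succ]
    gcongr
    exact norm_pow_le_sum_jap_pow q.1 3
  have hprod := norm_prod_derivCoeff_le he f q.1
  have hsum : 0 ≤ ∑ m, jap (q.1 m) ^ 3 := (pow_nonneg (norm_nonneg _) 3).trans
    (norm_pow_le_sum_jap_pow q.1 3)
  calc ‖gamTerm (fun i => derivCoeff (e i) f) (derivCoeff (s + 1) g) q‖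
      = ‖∏ i, derivCoeff (e i) f (q.1 i)‖ * ((|(q.2 : ℝ)| * |(lastFreq q : ℝ)|) *
          (‖derivCoeff s g q.2‖ * ‖derivCoeff s g (lastFreq q)‖)) := by
        rw [gamTerm, norm_mul, norm_mul, hpeel, hpeel, mul_mul_mul_comm |(q.2 : ℝ)|]
    _ ≤ (∏ i, (jap (q.1 i) ^ r * ‖fhat f (q.1 i)‖)) *
          (((n + 1 + C₀ ^ ((5 : ℝ) / 4)) ^ 2 * ∑ m, jap (q.1 m) ^ 3) *
            ((‖derivCoeff s g q.2‖ ^ 2 + ‖derivCoeff s g (lastFreq q)‖ ^ 2) / 2)) := by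
        have hnn := (norm_nonneg _).trans hprod
        gcongr
        exact mul_le_average_sq _ _
    _ = _ := by ring

theorem hasSum_sum_jap_pow_mul_prod (hf : MemHs (r + 4) f) (n : ℕ) :
    HasSum (fun k : Fin (n + 1) → ℤ =>
        (∑ m, jap (k m) ^ 3) * ∏ i, (jap (k i) ^ r * ‖fhat f (k i)‖))
      ((n + 1) * ((∑' k, jap k ^ (r + 3) * ‖fhat f k‖) * (∑' k, jap k ^ r * ‖fhat f k‖) ^ n)) := by
  have hmerge : ∀ k, jap k ^ 3 * (jap k ^ r * ‖fhat f k‖) = jap k ^ (r + 3) * ‖fhat f k‖ :=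
    fun k => by ring
  have hthree := hf.summable_jap_pow_mul_norm_fhat
  have hzero := (hf.mono (by omega : r + 1 ≤ r + 4)).summable_jap_pow_mul_norm_fhat
  have hprod := hasSum_sum_mul_fin_prod (a := fun k => jap k ^ 3)
    (by simpa only [hmerge] using hthree.norm) hzero.norm n
  simpa only [hmerge] using hprod

theorem tsum_sum_jap_pow_mul_prod_le (hf : MemHs (r + 4) f) (n : ℕ) :
    (n + 1) * ((∑' k, jap k ^ (r + 3) * ‖fhat f k‖) * (∑' k, jap k ^ r * ‖fhat f k‖) ^ n) ≤
      (n + 1) * √(∑' k, (jap k ^ 2)⁻¹) ^ (n + 1) *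
        (hsNormC (r + 1) f ^ n * hsNormC (r + 4) f) := by
  have hnn : ∀ m, 0 ≤ ∑' k, jap k ^ m * ‖fhat f k‖ := fun m =>
    tsum_nonneg fun k => mul_nonneg (pow_nonneg (jap_nonneg k) m) (norm_nonneg _)
  calc _ ≤ (n + 1) * ((√(∑' k, (jap k ^ 2)⁻¹) * hsNormC (r + 4) f) *
        (√(∑' k, (jap k ^ 2)⁻¹) * hsNormC (r + 1) f) ^ n) := by
        gcongr
        · exact pow_nonneg (hnn r) n
        · exact mul_nonneg (Real.sqrt_nonneg _) (hsNormC_nonneg _ _)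
        · exact hf.tsum_jap_pow_mul_norm_fhat_le
        · exact hnn r
        · exact (hf.mono (by omega : r + 1 ≤ r + 4)).tsum_jap_pow_mul_norm_fhat_le
    _ = _ := by ring

/-- The constant of the remainder estimate: the price of moving one derivative off each factor `g`,
times the loss of Cauchy-Schwarz in each of the `n + 1` low factors. -/
noncomputable def lossConst (C₀ : ℝ) (n : ℕ) : ℝ :=
  (n + 1 + C₀ ^ ((5 : ℝ) / 4)) ^ 2 * ((n + 1) * √(∑' k, (jap k ^ 2)⁻¹) ^ (n + 1))

theorem norm_tsum_gamTerm_nonresonant_low_le (he : ∀ i, e i ≤ r)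
    (hf : MemHs (r + 4) f) (hg : MemHs s g) :
    ‖∑' q : (Fin (n + 1) → ℤ) × ℤ, if ¬∑ i, q.1 i = 0 ∧ ¬IsHigh C₀ q then
        gamTerm (fun i => derivCoeff (e i) f) (derivCoeff (s + 1) g) q else 0‖ ≤
      lossConst C₀ n * (hsNormC (r + 1) f ^ n * hsNormC (r + 4) f * hsNormC s g ^ 2) := by
  have hweight : ∀ k : Fin (n + 1) → ℤ,
      0 ≤ (∑ m, jap (k m) ^ 3) * ∏ i, (jap (k i) ^ r * ‖fhat f (k i)‖) := fun k =>
    mul_nonneg (Finset.sum_nonneg fun m _ => pow_nonneg (jap_nonneg _) 3)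
      (Finset.prod_nonneg fun i _ => mul_nonneg (pow_nonneg (jap_nonneg _) r) (norm_nonneg _))
  have hmajorant := (hasSum_mul_average hweight (fun l => sq_nonneg ‖derivCoeff s g l‖)
    (hasSum_sum_jap_pow_mul_prod hf n) hg.summable_sq_norm_derivCoeff.hasSum).mul_left
    ((n + 1 + C₀ ^ ((5 : ℝ) / 4)) ^ 2)
  refine (tsum_of_norm_bounded hmajorant fun q => ?_).trans ?_
  · split_ifs with hq
    · exact norm_gamTerm_le s he f g hq.1 hq.2
    · rw [norm_zero]
      exact mul_nonneg (sq_nonneg _) (mul_nonneg (hweight _) (by positivity))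
  · refine (mul_le_mul_of_nonneg_left (mul_le_mul (tsum_sum_jap_pow_mul_prod_le hf n)
      (tsum_sq_norm_derivCoeff_le hg) (tsum_nonneg fun l => sq_nonneg _) ?_)
      (sq_nonneg _)).trans_eq ?_
    · have := hsNormC_nonneg (r + 1) f
      have := hsNormC_nonneg (r + 4) f
      positivity
    · rw [lossConst]
      ring

end Remainder

section Multiplier

open Complex (I)
open scoped Real

/-- The order of the derivative that `D_{a,b,c}` puts on the factor with index `i` (from `0`). -/
def derivOrder (a b c i : ℕ) : ℕ :=
  if i < a then 3 else if i < a + b then 2 else if i < a + b + c then 1 else 0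

theorem derivOrder_le (a b c i : ℕ) : derivOrder a b c i ≤ 3 := by
  unfold derivOrder
  split_ifs <;> norm_num

theorem derivOrder_eq_zero {a b c i : ℕ} (hi : a + b + c ≤ i) : derivOrder a b c i = 0 := by
  rw [derivOrder, if_neg (by omega), if_neg (by omega), if_neg (by omega)]

theorem prod_derivOrder {R : Type*} [CommMonoid R] (v : ℕ → R) (a b c d : ℕ) :
    ∏ i : Fin (a + b + c + d), v (derivOrder a b c i) = v 3 ^ a * v 2 ^ b * v 1 ^ c * v 0 ^ d := by
  have hblock : ∀ {m r : ℕ} (j : ℕ), (∀ i < m, derivOrder a b c (j + i) = r) →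
      ∏ i ∈ Finset.range m, v (derivOrder a b c (j + i)) = v r ^ m := fun {m r} j hj => by
    rw [Finset.prod_eq_pow_card fun i hi => congrArg v (hj i (Finset.mem_range.1 hi)),
      Finset.card_range]
  rw [Fin.prod_univ_eq_prod_range (fun i => v (derivOrder a b c i)), Finset.prod_range_add,
    Finset.prod_range_add, Finset.prod_range_add, hblock (r := 2) a, hblock (r := 1) (a + b),
    hblock (r := 0) (a + b + c)]
  · congr 3
    simpa using hblock (m := a) (r := 3) 0 fun i hi => by simp [derivOrder, hi]
  all_goals
    intro i hi
    grind [derivOrder]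

theorem Dabc_eq_prod_derivOrder (p a b c : ℕ) (k : Fin (p + 1) → ℤ) :
    Dabc p a b c k = ∏ i, (I * k i) ^ derivOrder a b c i := by
  rw [Dabc, Finset.prod_filter, Finset.prod_filter, Finset.prod_filter,
    ← Finset.prod_mul_distrib, ← Finset.prod_mul_distrib]
  refine Finset.prod_congr rfl fun i _ => ?_
  unfold derivOrder
  by_cases h₃ : (i : ℕ) < a
  · simp [h₃, h₃.not_ge, show ¬a + b ≤ (i : ℕ) by omega]
  · by_cases h₂ : (i : ℕ) < a + b
    · simp [h₃, h₂, h₂.not_ge, not_lt.1 h₃]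
    · simp [h₃, h₂, not_lt.1 h₂]

theorem Dabc_zeroSumEquiv {n a b c : ℕ} (h : a + b + c ≤ n) (q : (Fin n → ℤ) × ℤ) :
    Dabc (n + 1) a b c (zeroSumEquiv n q).1 = ∏ i, (I * q.1 i) ^ derivOrder a b c i := by
  simp [Dabc_eq_prod_derivOrder, Fin.prod_univ_castSucc, derivOrder_eq_zero h,
    derivOrder_eq_zero (h.trans n.le_succ)]

/-- The multiplier `λ b (ik_p)^{s+1} (ik_{p+1})^{s+1} D_{a,b-1,c}`, without cut-offs. -/
noncomputable def quasilinearSymbol (s p : ℕ) (lam : ℝ) (a b c : ℕ) (k : Fin (p + 1) → ℤ) : ℂ :=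
  (lam : ℂ) * (b : ℂ) * (I * (k (⟨p - 1, by omega⟩ : Fin (p + 1)) : ℂ)) ^ (s + 1)
    * (I * (k (Fin.last p) : ℂ)) ^ (s + 1) * Dabc p a (b - 1) c k

theorem Gam_quasilinearSymbol_mul {n a b c : ℕ} (h : a + (b - 1) + c ≤ n) (s : ℕ) (lam : ℝ)
    (χ : (Fin (n + 1 + 1) → ℤ) → ℂ) (f g : ℝ → ℂ) :
    Gam (n + 1) (fun k => quasilinearSymbol s (n + 1) lam a b c k * χ k) (tup (n + 1) f g) =
      lam * b * ∑' q, gamTerm (fun i => derivCoeff (derivOrder a (b - 1) c i) f)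
        (derivCoeff (s + 1) g) q * χ (zeroSumEquiv n q).1 := by
  rw [Gam_eq_tsum, ← tsum_mul_left]
  refine tsum_congr fun q => ?_
  have hpen : (zeroSumEquiv n q).1 ⟨n + 1 - 1, by omega⟩ = q.2 := zeroSumEquiv_penultimate q
  simp only [quasilinearSymbol, gamTerm, derivCoeff, hpen, zeroSumEquiv_last, Dabc_zeroSumEquiv h,
    Finset.prod_mul_distrib]
  ring

theorem mean_prod_iteratedDeriv_eq_tsum {n r : ℕ} {e : Fin n → ℕ} (he : ∀ i, e i ≤ r) {f : ℝ → ℂ}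
    (hf : ContDiff ℝ r f) (hfp : Function.Periodic f (2 * π)) (hfs : MemHs (r + 1) f) :
    ((2 * π : ℝ) : ℂ)⁻¹ * ∫ x in (0 : ℝ)..(2 * π), ∏ i, iteratedDeriv (e i) f x =
      ∑' k : Fin n → ℤ, if ∑ i, k i = 0 then ∏ i, derivCoeff (e i) f (k i) else 0 := by
  have he' : ∀ i, (e i : WithTop ℕ∞) ≤ r := fun i => by exact_mod_cast he i
  have hcoeff : ∀ i, fhat (iteratedDeriv (e i) f) = derivCoeff (e i) f := fun i =>
    funext fun k => fhat_iteratedDeriv (hf.of_le (he' i)) hfp k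
  simpa only [hcoeff] using mean_prod_eq_tsum_fhat (F := fun i => iteratedDeriv (e i) f)
    (fun i => hf.continuous_iteratedDeriv (e i) (he' i))
    (fun i => periodic_iteratedDeriv hfp (e i))
    (fun i => by simpa only [hcoeff] using hfs.summable_norm_derivCoeff (he i))

theorem PNj_eq_tsum {f : ℝ → ℝ} (hf : ContDiff ℝ 3 f) (hfp : Function.Periodic f (2 * π))
    (hfs : MemHs 4 (cF f)) (lam : ℝ) {a b c d n : ℕ} (hn : n = a + (b - 1) + c + d) :
    (PNj lam a b c d f : ℂ) = lam * b * ∑' k : Fin n → ℤ, if ∑ i, k i = 0 then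
      ∏ i : Fin n, derivCoeff (derivOrder a (b - 1) c i) (cF f) (k i) else 0 := by
  subst hn
  have hprod : ∀ x, ∏ i : Fin (a + (b - 1) + c + d),
      iteratedDeriv (derivOrder a (b - 1) c i) (cF f) x = ((iteratedDeriv 3 f x ^ a *
        iteratedDeriv 2 f x ^ (b - 1) * deriv f x ^ c * f x ^ d : ℝ) : ℂ) := fun x => by
    have hderiv : ∀ m ≤ 3, iteratedDeriv m (cF f) x = ((iteratedDeriv m f x : ℝ) : ℂ) :=
        fun m hm =>
      congrFun (iteratedDeriv_cF (hf.of_le (by exact_mod_cast hm))) x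
    rw [prod_derivOrder fun m => iteratedDeriv m (cF f) x, hderiv 3 le_rfl, hderiv 2 (by simp),
      hderiv 1 (by simp), hderiv 0 (by simp), iteratedDeriv_one, iteratedDeriv_zero]
    push_cast
    rfl
  rw [← mean_prod_iteratedDeriv_eq_tsum (fun i => derivOrder_le a (b - 1) c i)
    (by exact_mod_cast contDiff_cF hf) (periodic_cF hfp) hfs]
  simp only [hprod, intervalIntegral.integral_ofReal, PNj]
  push_cast
  ring

theorem Gam_sub_PNj_mul_dxNormSq_sub_Gam_eq (s : ℕ) (lam : ℝ) {a b c d n : ℕ}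
    (hn : n = a + (b - 1) + c + d) (C₀ : ℝ) {f g : ℝ → ℝ} (hf : ContDiff ℝ 3 f)
    (hfp : Function.Periodic f (2 * π)) (hfs : MemHs 4 (cF f)) (hgs : MemHs (s + 1) (cF g)) :
    Gam (n + 1) (quasilinearSymbol s (n + 1) lam a b c) (tup (n + 1) (cF f) (cF g))
        - ((PNj lam a b c d f * dxNormSq (s + 1) (cF g) : ℝ) : ℂ)
        - Gam (n + 1)
            (fun k => quasilinearSymbol s (n + 1) lam a b c k * MH C₀ (n + 1) k * MNZ (n + 1) k)
            (tup (n + 1) (cF f) (cF g)) =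
      lam * b * ∑' q : (Fin n → ℤ) × ℤ, if ¬∑ i, q.1 i = 0 ∧ ¬IsHigh C₀ q then
        gamTerm (fun i => derivCoeff (derivOrder a (b - 1) c i) (cF f))
          (derivCoeff (s + 1) (cF g)) q else 0 := by
  have hU : ∀ i : Fin n,
      Summable fun k => ‖derivCoeff (derivOrder a (b - 1) c i) (cF f) k‖ := fun i =>
    hfs.summable_norm_derivCoeff (derivOrder_le a (b - 1) c i)
  have hV := hgs.summable_sq_norm_derivCoeff
  have hGam := Gam_quasilinearSymbol_mul (by omega : a + (b - 1) + c ≤ n) s lam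
    (f := cF f) (g := cF g)
  have hfull := hGam fun _ => 1
  have hhigh := hGam fun k => MH C₀ (n + 1) k * MNZ (n + 1) k
  simp only [mul_one] at hfull
  simp only [MH_zeroSumEquiv, MNZ_zeroSumEquiv, ← mul_assoc (quasilinearSymbol _ _ _ _ _ _ _)]
    at hhigh
  rw [← tsum_sub_tsum_sub_tsum_eq_tsum_compl (summable_norm_gamTerm hU hV).of_norm,
    tsum_resonant_gamTerm hU hV, tsum_derivCoeff_mul_derivCoeff_neg, hfull, hhigh,
    Complex.ofReal_mul, PNj_eq_tsum hf hfp hfs lam hn]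
  ring

end Multiplier

theorem lem_ga23_first_general (s : ℕ) (lam : ℝ) (a b c d : ℕ) (p : ℕ) (hpdef : p = a + b + c + d)
    (hp2 : 2 ≤ p) (hb : 1 ≤ b) (C₀ : ℝ) :
    ∃ C : ℝ, 0 < C ∧ ∀ f g : ℝ → ℝ, ContDiff ℝ 3 f → Function.Periodic f (2 * Real.pi) →
      MemHs 7 (cF f) → MemHs (s + 1) (cF g) →
      ‖Gam p (quasilinearSymbol s p lam a b c) (tup p (cF f) (cF g))
        - ((PNj lam a b c d f * dxNormSq (s + 1) (cF g) : ℝ) : ℂ)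
        - Gam p (fun k => quasilinearSymbol s p lam a b c k * MH C₀ p k * MNZ p k)
            (tup p (cF f) (cF g))‖
      ≤ C * hsNormC 4 (cF f) ^ (p - 2) * hsNormC 7 (cF f) * hsNormC s (cF g) ^ 2 := by
  obtain ⟨n, rfl⟩ : ∃ n, p = n + 1 + 1 := ⟨p - 2, by omega⟩
  refine ⟨|lam| * b * lossConst C₀ n + 1, by unfold lossConst; positivity,
    fun f g hf hfp hfs hgs => ?_⟩
  have hremainder := norm_tsum_gamTerm_nonresonant_low_le (C₀ := C₀) (n := n) s
    (fun i => derivOrder_le a (b - 1) c i) hfs (hgs.mono s.le_succ)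
  have := hsNormC_nonneg 4 (cF f)
  have := hsNormC_nonneg 7 (cF f)
  rw [Gam_sub_PNj_mul_dxNormSq_sub_Gam_eq s lam (by omega) C₀ hf hfp
    (hfs.mono (by norm_num)) hgs, norm_mul, norm_mul, Complex.norm_real, Complex.norm_natCast,
    Real.norm_eq_abs, show n + 1 + 1 - 2 = n from rfl]
  calc |lam| * b * _
      ≤ |lam| * b * (lossConst C₀ n *
          (hsNormC 4 (cF f) ^ n * hsNormC 7 (cF f) * hsNormC s (cF g) ^ 2)) := by gcongr
    _ ≤ (|lam| * b * lossConst C₀ n + 1) *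
          (hsNormC 4 (cF f) ^ n * hsNormC 7 (cF f) * hsNormC s (cF g) ^ 2) := by
        rw [← mul_assoc]
        gcongr
        exact le_add_of_nonneg_right zero_le_one
    _ = _ := by ring

/-- **Lemma lem_ga23 (first estimate).** For real-valued smooth `2π`-periodic `f, g` and
`M_{2,*} = λ_j b_j (ik_{p_j})^{s+1}(ik_{p_j+1})^{s+1}D_{a_j,b_j-1,c_j}M_H M_NZ`:
`|Γ^{(p_j)}(λ_j b_j (ik_{p_j})^{s+1}(ik_{p_j+1})^{s+1}D_{a_j,b_j-1,c_j}; f,…,f,g,g)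
  − P_{N_j}(f)‖∂_x^{s+1}g‖_{L²}² − Γ^{(p_j)}(M_{2,*}; f,…,f,g,g)|
  ≲ ‖f‖_{H⁴}^{p_j−2} ‖f‖_{H⁷} ‖g‖_{H^s}²`. -/
theorem lem_ga23_first (s : ℕ) (lam : ℝ) (a b c d : ℕ) (p : ℕ) (hpdef : p = a + b + c + d)
    (hp2 : 2 ≤ p) (hb : 1 ≤ b) (C₀ : ℝ) (hC₀ : 0 < C₀) :
    ∃ C : ℝ, 0 < C ∧ ∀ f g : ℝ → ℝ,
      ContDiff ℝ (⊤ : ℕ∞) f → Function.Periodic f (2 * Real.pi) →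
      ContDiff ℝ (⊤ : ℕ∞) g → Function.Periodic g (2 * Real.pi) →
      ‖Gam p (fun k => (lam : ℂ) * (b : ℂ)
            * (Complex.I * (k (⟨p - 1, by omega⟩ : Fin (p + 1)) : ℂ)) ^ (s + 1)
            * (Complex.I * (k (Fin.last p) : ℂ)) ^ (s + 1)
            * Dabc p a (b - 1) c k)
          (tup p (cF f) (cF g))
        - ((PNj lam a b c d f * dxNormSq (s + 1) (cF g) : ℝ) : ℂ)
        - Gam p (fun k => (lam : ℂ) * (b : ℂ)
            * (Complex.I * (k (⟨p - 1, by omega⟩ : Fin (p + 1)) : ℂ)) ^ (s + 1)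
            * (Complex.I * (k (Fin.last p) : ℂ)) ^ (s + 1)
            * Dabc p a (b - 1) c k * MH C₀ p k * MNZ p k)
          (tup p (cF f) (cF g))‖
      ≤ C * hsNormC 4 (cF f) ^ (p - 2) * hsNormC 7 (cF f) * hsNormC s (cF g) ^ 2 := by
  obtain ⟨C, hC, hbound⟩ := lem_ga23_first_general s lam a b c d p hpdef hp2 hb C₀
  refine ⟨C, hC, fun f g hf hfp hg hgp => hbound f g (contDiff_infty.1 hf 3) hfp ?_ ?_⟩
  · exact memHs_of_contDiff (contDiff_infty.1 (contDiff_cF hf) 7) (periodic_cF hfp)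
  · exact memHs_of_contDiff (contDiff_infty.1 (contDiff_cF hg) (s + 1)) (periodic_cF hgp)

end FifthOrderStmt17
end
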